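/- arXiv:2311.03248 — 4 statements merged into one kernel-verified Lean document; each statement's English description precedes it below -/
import Mathlib

section
/- Let t ≥ 0 and let p_1, …, p_{t+1} be prime numbers with p_i ≡ 2 (mod 3) for each i ∈ {1,…,t+1}. Then for every integer n ≥ 0 and every positive integer j not divisible by p_{t+1}, B_3^{(12)}(3·p_1^2⋯p_{t+1}^2·n + (p_1^2⋯p_t^2·p_{t+1}·(p_{t+1}+3j) − 1)) ≡ 0 (mod 3). -/
/-!
The proof compares the generating function of `B_3^{(12)}` with the modular discriminant
`Δ = q ∏ (1 - q^i)^24 = ∑ τ(m) q^m`.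

By Glaisher's theorem, `3`-regular partitions are generated by `∏ (1 + q^i + q^{2i})`, which is
`∏ (1 - q^i)²` modulo `3`; hence `B_3^{(12)}(n) ≡ τ(n + 1) (mod 3)` (`eventually_B_eq`). The integers
`τ(m)` are tied to the analytic `q`-expansion of `Δ` through the locally uniform convergence of the
partial products (`eventually_discPoly_coeff`).

Put `S_k = ∑ σ_k(m) q^m`. From `1728 Δ = E₄³ - E₆²` and `E₈ = E₄²` one gets (`twelve_mul_eq`)
`12 Δ = 7 S₅ - 5 S₃ + 10 S₇ + 96000 S₃³ - 1764 S₅²`.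
Here `9 ∣ 1764` and `3 ∣ 96000`, and the `m`-th coefficient of `S₃³ ≡ S₃(q³) (mod 3)` is divisible by
`3` when `3 ∤ m`. So for `3 ∤ m`, `12 τ(m)` is modulo `9` the sum over `d ∣ m` of
`7 d⁵ - 5 d³ + 10 d⁷`. This weight changes sign modulo `9` when `d` is multiplied by a prime
`p ≡ 2 (mod 3)` (`divisorWeight_add_mul`), so the sum vanishes as soon as such a `p` divides `m` to
an odd power, and then `3 ∣ τ(m)` (`three_dvd_coeff`).

In the theorem, the argument of `B` plus one equals `(p_1 ⋯ p_t)² p M` with `p = p_{t+1}` and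
`M = 3 p n + p + 3 j` prime to `p`: it is prime to `3` and `p` divides it to an odd power.
-/

/-- `B ℓ r n` is the number of `ℓ`-regular `r`-multipartitions of `n`:
ordered `r`-tuples `(λ⁽¹⁾, …, λ⁽ʳ⁾)` of partitions, none of whose parts is
divisible by `ℓ`, whose sizes sum to `n`. -/
def B (ℓ r n : ℕ) : ℕ :=
  Fintype.card {f : Fin r → Σ a : Fin (n + 1), Nat.Partition a //
    (∑ i, ((f i).1 : ℕ)) = n ∧ ∀ i, ∀ part ∈ (f i).2.parts, ¬ ℓ ∣ part}

open PowerSeries Finset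

/-! ### Reduction of the generating function modulo 3 -/

lemma coeff_pow_eq {R : Type*} [CommRing R] (n r : ℕ) (F G : R⟦X⟧)
    (h : ∀ m ≤ n, coeff m F = coeff m G) : coeff n (F ^ r) = coeff n (G ^ r) := by
  have h1 : (X : R⟦X⟧) ^ (n + 1) ∣ F - G := by
    rw [X_pow_dvd_iff]
    intro m hm
    rw [map_sub, h m (by lia), sub_self]
  have h2 := X_pow_dvd_iff.mp (h1.trans (sub_dvd_pow_sub_pow F G r)) n (by lia)
  rwa [map_sub, sub_eq_zero] at h2

/-- The generating function of `r`-multipartitions is the `r`-th power of the generating function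
of `l`-regular partitions. -/
lemma B_eq_coeff {R : Type*} [CommRing R] (l r n : ℕ) :
    (B l r n : R) =
      coeff n ((PowerSeries.mk fun m ↦ (#(Nat.Partition.restricted m (¬ l ∣ ·)) : R)) ^ r) := by
  classical
  -- Only partitions of numbers at most `n` matter, so the series may be replaced by a finite sum.
  rw [← coeff_pow_eq n r (∑ x : (Σ a : Fin (n + 1), Nat.Partition a),
    if (∀ part ∈ x.2.parts, ¬ l ∣ part) then (X : R⟦X⟧) ^ (x.1 : ℕ) else 0)]
  · rw [← Fin.prod_const, Finset.prod_univ_sum]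
    have : ∀ f : Fin r → (Σ a : Fin (n + 1), Nat.Partition a),
        coeff n (∏ i, if (∀ part ∈ (f i).2.parts, ¬ l ∣ part) then
          (X : R⟦X⟧) ^ ((f i).1 : ℕ) else 0) =
        if ((∑ i, ((f i).1 : ℕ)) = n ∧ ∀ i, ∀ part ∈ (f i).2.parts, ¬ l ∣ part) then 1 else 0 := by
      intro f
      by_cases h : ∀ i, ∀ part ∈ (f i).2.parts, ¬ l ∣ part
      · rw [Finset.prod_congr rfl (fun i _ ↦ if_pos (h i)), Finset.prod_pow_eq_pow_sum,
          coeff_X_pow]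
        exact if_congr ⟨fun h' ↦ ⟨h'.symm, h⟩, fun h' ↦ h'.1.symm⟩ rfl rfl
      · rw [if_neg (fun h' ↦ h h'.2)]
        push Not at h
        obtain ⟨i, q, hq, hl⟩ := h
        rw [Finset.prod_eq_zero (Finset.mem_univ i), map_zero]
        rw [if_neg]
        exact fun h ↦ h q hq hl
    simp only [Fintype.piFinset_univ, map_sum]
    rw [Finset.sum_congr rfl (fun f _ ↦ this f)]
    rw [Finset.sum_boole, B, Fintype.card_subtype]
  · intro m hm
    rw [Fintype.sum_sigma, map_sum, Finset.sum_eq_single ⟨m, by lia⟩]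
    · simp only [map_sum, coeff_mk, Nat.Partition.restricted]
      rw [Finset.card_filter, Nat.cast_sum]
      apply Finset.sum_congr rfl
      intro x _
      split_ifs <;> simp_all [coeff_X_pow]
    · intro a _ ha
      simp only [map_sum]
      apply Finset.sum_eq_zero
      intro x _
      split_ifs
      · rw [coeff_X_pow, if_neg]
        rintro rfl
        exact ha rfl
      · simp
    · simp

/-- Modulo `3`, `1 + x + x² = (1 - x)²`. -/
lemma sum_range_three_pow (i : ℕ) :
    (∑ j ∈ range 3, (X : (ZMod 3)⟦X⟧) ^ ((i + 1) * j)) ^ 12 = (1 - X ^ (i + 1)) ^ 24 := by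
  have h3 : (3 : (ZMod 3)⟦X⟧) = 0 := by
    have : (3 : ZMod 3) = 0 := by decide
    rw [← map_ofNat (C (R := ZMod 3)) 3, this, map_zero]
  have e : ∑ j ∈ range 3, (X : (ZMod 3)⟦X⟧) ^ ((i + 1) * j) = (1 - X ^ (i + 1)) ^ 2 := by
    simp only [sum_range_succ, range_zero, sum_empty, pow_mul, pow_zero, pow_one]
    linear_combination (X ^ (i+1)) * h3
  exact e ▸ (pow_mul (1 - (X : (ZMod 3)⟦X⟧) ^ (i + 1)) 2 12).symm

open scoped PowerSeries.WithPiTopology in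
/-- By Glaisher's theorem `3`-regular partitions have generating function
`∏ (1 + x^i + x^{2i}) ≡ ∏ (1 - x^i)² (mod 3)`, whose twelfth power is `∏ (1 - x^i)^24`. -/
lemma eventually_B_eq (n : ℕ) : ∀ᶠ N in Filter.atTop,
    (B 3 12 n : ZMod 3) = coeff n (∏ i ∈ range N, (1 - (X : (ZMod 3)⟦X⟧) ^ (i + 1)) ^ 24) := by
  let _ : TopologicalSpace (ZMod 3) := ⊥
  have : DiscreteTopology (ZMod 3) := ⟨rfl⟩
  have h := Nat.Partition.hasProd_powerSeriesMk_card_countRestricted (ZMod 3) (m := 3) (by norm_num)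
  rw [← Nat.Partition.powerSeriesMk_card_restricted_eq_powerSeriesMk_card_countRestricted _
    (by norm_num)] at h
  have h2 := (h.tendsto_prod_nat).pow 12
  rw [WithPiTopology.tendsto_iff_coeff_tendsto] at h2
  have h3 := h2 n
  rw [← B_eq_coeff, nhds_discrete, Filter.tendsto_pure] at h3
  filter_upwards [h3] with N hN
  rw [← hN, ← Finset.prod_pow]
  exact congrArg _ (Finset.prod_congr rfl fun i _ ↦ sum_range_three_pow i)

/-! ### Integrality of the `q`-expansion of the discriminant -/

/-- The partial product `q ∏_{i < N} (1 - q^{i+1})^24` of the discriminant, as a polynomial in `q`. -/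
noncomputable def discPoly (R : Type*) [CommRing R] (N : ℕ) : Polynomial R :=
  Polynomial.X * ∏ i ∈ range N, (1 - Polynomial.X ^ (i + 1)) ^ 24

lemma map_discPoly {R S : Type*} [CommRing R] [CommRing S] (f : R →+* S) (N : ℕ) :
    (discPoly R N).map f = discPoly S N := by
  simp [discPoly, Polynomial.map_prod]

lemma coeff_succ_discPoly {R : Type*} [CommRing R] (N n : ℕ) :
    (discPoly R N).coeff (n + 1) = coeff n (∏ i ∈ range N, (1 - (X : R⟦X⟧) ^ (i + 1)) ^ 24) := by
  rw [discPoly, Polynomial.coeff_X_mul, ← Polynomial.coeff_coe]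
  congr 1
  rw [← Polynomial.coeToPowerSeries.ringHom_apply, map_prod]
  simp

lemma tendstoLocallyUniformlyOn_const_seq (f : ℂ → ℂ) (s : Set ℂ) :
    TendstoLocallyUniformlyOn (fun (_ : ℕ) ↦ f) f Filter.atTop s :=
  fun _ hu _ _ ↦ ⟨s, self_mem_nhdsWithin, .of_forall fun _ _ _ ↦ refl_mem_uniformity hu⟩

lemma tendstoLocallyUniformlyOn_discPoly :
    TendstoLocallyUniformlyOn (fun N q ↦ (discPoly ℂ N).eval q)
      (UpperHalfPlane.cuspFunction 1 ModularForm.discriminant) Filter.atTop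
      (Metric.ball (0 : ℂ) 1) := by
  have h1 : TendstoLocallyUniformlyOn (fun N q ↦ ∏ i ∈ range N, (1 - q ^ (i + 1)))
      (fun q : ℂ ↦ ∏' i, (1 - q ^ (i + 1))) Filter.atTop (Metric.ball (0 : ℂ) 1) := by
    have h := ModularForm.multipliableLocallyUniformlyOn_one_sub_pow.hasProdLocallyUniformlyOn
    rw [hasProdLocallyUniformlyOn_iff_tendstoLocallyUniformlyOn] at h
    intro u hu x hx
    obtain ⟨t, ht, h⟩ := h u hu x hx
    exact ⟨t, ht, Filter.tendsto_finset_range.eventually h⟩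
  have hc := ModularForm.differentiableOn_tprod_one_sub_pow.continuousOn
  have hpow : ∀ k : ℕ, TendstoLocallyUniformlyOn
      (fun N q ↦ (∏ i ∈ range N, (1 - q ^ (i + 1))) ^ k)
      (fun q : ℂ ↦ (∏' i, (1 - q ^ (i + 1))) ^ k) Filter.atTop (Metric.ball (0 : ℂ) 1) := by
    intro k
    induction k with
    | zero =>
      simp only [pow_zero]
      exact tendstoLocallyUniformlyOn_const_seq _ _
    | succ k ih =>
      simp only [pow_succ]
      exact ih.fun_mul₀ h1 (hc.pow k) hc
  have hX : TendstoLocallyUniformlyOn (fun (_ : ℕ) (q : ℂ) ↦ q) (fun q ↦ q) Filter.atTop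
      (Metric.ball (0 : ℂ) 1) := tendstoLocallyUniformlyOn_const_seq _ _
  have h := hX.fun_mul₀ (hpow 24) continuousOn_id (hc.pow 24)
  refine (h.congr_right ?_).congr ?_
  · intro q hq
    rw [ModularForm.discriminant_cuspFunction_eqOn hq]
    beta_reduce
    rw [(ModularForm.multipliable_one_sub_pow (by simpa using hq)).tprod_pow 24]
  · intro N q hq
    simp [discPoly, Polynomial.eval_prod, Finset.prod_pow]

lemma tendsto_discPoly_coeff (m : ℕ) :
    Filter.Tendsto (fun N ↦ (discPoly ℂ N).coeff m) Filter.atTop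
      (nhds ((UpperHalfPlane.qExpansion 1 ModularForm.discriminant).coeff m)) := by
  have key : ∀ k : ℕ, TendstoLocallyUniformlyOn
      (fun N q ↦ (Polynomial.derivative^[k] (discPoly ℂ N)).eval q)
      (iteratedDeriv k (UpperHalfPlane.cuspFunction 1 ModularForm.discriminant)) Filter.atTop
      (Metric.ball (0 : ℂ) 1) := by
    intro k
    induction k with
    | zero => simpa using tendstoLocallyUniformlyOn_discPoly
    | succ k ih =>
      have := ih.deriv (.of_forall fun N ↦ (Polynomial.differentiable _).differentiableOn)
        Metric.isOpen_ball
      rw [iteratedDeriv_succ]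
      refine this.congr ?_
      intro N q hq
      simp [Function.iterate_succ_apply']
  have h := ((key m).tendsto_at (Metric.mem_ball_self one_pos)).const_mul ((m.factorial : ℂ)⁻¹)
  rw [UpperHalfPlane.qExpansion_coeff]
  refine h.congr fun N ↦ ?_
  rw [← Polynomial.coeff_zero_eq_eval_zero, Polynomial.coeff_iterate_derivative]
  have : (m.factorial : ℂ) ≠ 0 := by exact_mod_cast m.factorial_ne_zero
  simp [Nat.descFactorial_self, this]

/-- For each `m`, the integer coefficients of the partial products are eventually equal to the
`q`-expansion coefficient `τ(m)` of the discriminant. -/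
lemma eventually_discPoly_coeff (m : ℕ) : ∀ᶠ N in Filter.atTop,
    (((discPoly ℤ N).coeff m : ℤ) : ℂ) =
      (UpperHalfPlane.qExpansion 1 ModularForm.discriminant).coeff m := by
  have h := tendsto_discPoly_coeff m
  have e : ∀ N, (discPoly ℂ N).coeff m = (((discPoly ℤ N).coeff m : ℤ) : ℂ) := by
    intro N
    rw [← map_discPoly (Int.castRingHom ℂ), Polynomial.coeff_map]
    rfl
  simp only [e] at h
  have hZ : CauchySeq (fun N ↦ (discPoly ℤ N).coeff m) := by
    have := h.cauchySeq
    rw [Metric.cauchySeq_iff] at this ⊢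
    intro ε hε
    obtain ⟨N, hN⟩ := this ε hε
    refine ⟨N, fun a ha b hb ↦ ?_⟩
    have := hN a ha b hb
    rwa [Complex.dist_eq, ← Int.cast_sub, Complex.norm_intCast, Int.cast_sub, ← Int.dist_eq] at this
  obtain ⟨z, hz⟩ := cauchySeq_tendsto_of_complete hZ
  have h2 := hz
  rw [nhds_discrete, Filter.tendsto_pure] at h2
  have h3 : Filter.Tendsto (fun N ↦ (((discPoly ℤ N).coeff m : ℤ) : ℂ)) Filter.atTop
      (nhds (z : ℂ)) := tendsto_nhds_of_eventually_eq (h2.mono fun N hN ↦ by rw [hN])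
  filter_upwards [h2] with N hN
  rw [hN, tendsto_nhds_unique h h3]

/-! ### The discriminant in terms of divisor sums -/

/-- Modulo `3`, the cube of a power series `F(q)` is `F(q³)`. -/
lemma three_dvd_coeff_cube (F : ℤ⟦X⟧) {m : ℕ} (hm : ¬ 3 ∣ m) : (3 : ℤ) ∣ coeff m (F ^ 3) := by
  rw [← coeff_pow_eq m 3 (trunc (m + 1) F : ℤ⟦X⟧) F fun i hi ↦ by
    rw [Polynomial.coeff_coe, coeff_trunc, if_pos (by lia)]]
  rw [← Polynomial.coe_pow, Polynomial.coeff_coe]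
  refine (ZMod.intCast_zmod_eq_zero_iff_dvd _ 3).mp ?_
  have : Fact (Nat.Prime 3) := ⟨Nat.prime_three⟩
  rw [← eq_intCast (Int.castRingHom (ZMod 3)), ← Polynomial.coeff_map, Polynomial.map_pow,
    ← ZMod.expand_card, Polynomial.coeff_expand (by norm_num), if_neg hm]

/-- The power series `∑_{m ≥ 1} σ_k(m) q^m`, with `σ_k(m)` the sum of the `k`-th powers of the
divisors of `m`. -/
noncomputable def sigmaSeries (k : ℕ) : ℤ⟦X⟧ :=
  PowerSeries.mk fun m ↦ (ArithmeticFunction.sigma k m : ℤ)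

/-- The `q`-expansion of `E_k` has integer coefficients when `-2k / B_k` is an integer `c`. -/
lemma qExpansion_E {k : ℕ} (hk : 3 ≤ k) (hk2 : Even k) (c : ℤ)
    (hc : -(2 * k / bernoulli k : ℚ) = c) :
    UpperHalfPlane.qExpansion 1 (ModularForm.E hk) =
      PowerSeries.map (Int.castRingHom ℂ) (1 + (c : ℤ⟦X⟧) * sigmaSeries (k - 1)) := by
  ext m
  rw [EisensteinSeries.E_qExpansion_coeff hk hk2]
  have hc' : -(2 * k / (bernoulli k : ℂ)) = (c : ℂ) := by
    exact_mod_cast congrArg (Rat.cast : ℚ → ℂ) hc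
  have hC : (c : ℤ⟦X⟧) = C c := by simp
  rw [hC, coeff_map, map_add, coeff_C_mul, sigmaSeries, coeff_mk, coeff_one]
  split_ifs with h
  · simp [h]
  · rw [hc']
    simp

open UpperHalfPlane ModularForm EisensteinSeries MatrixGroups in
/-- `E₈ = E₄²`, by the Sturm bound in weight `8`. -/
lemma qExpansion_E_eight :
    qExpansion 1 (E (by norm_num : 3 ≤ 8)) = qExpansion 1 E₄ ^ 2 := by
  let f : ModularForm 𝒮ℒ 8 :=
    E (by norm_num : 3 ≤ 8) - ModularForm.mcast (by decide) (E₄.pow 2)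
  have hq : qExpansion 1 f = qExpansion 1 (E (by norm_num : 3 ≤ 8)) - qExpansion 1 E₄ ^ 2 := by
    simp only [f, FunLike.coe_sub, coe_mcast,
      ModularForm.qExpansion_sub one_pos one_mem_strictPeriods_SL,
      ModularForm.qExpansion_pow one_pos one_mem_strictPeriods_SL]
  have hf : f = 0 := by
    apply sturm_bound_levelOne
    rw [hq]
    have : ((8 : ℤ).toNat / 12) = 0 := by decide
    rw [this, Nat.cast_zero, pos_iff_ne_zero, order_ne_zero_iff_constCoeff_eq_zero,
      map_sub, map_pow, ← coeff_zero_eq_constantCoeff_apply, ← coeff_zero_eq_constantCoeff_apply,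
      E_qExpansion_coeff_zero _ ⟨4, rfl⟩, E_qExpansion_coeff_zero _ ⟨2, rfl⟩]
    norm_num
  have : qExpansion 1 f = 0 := by
    rw [ModularForm.qExpansion_eq_zero_iff one_pos one_mem_strictPeriods_SL, hf]
  rw [hq] at this
  exact sub_eq_zero.mp this

open UpperHalfPlane ModularForm EisensteinSeries MatrixGroups in
lemma qExpansion_discriminant :
    1728 * qExpansion 1 discriminant = qExpansion 1 E₄ ^ 3 - qExpansion 1 E₆ ^ 2 := by
  let f : ModularForm 𝒮ℒ 12 :=
    ModularForm.mcast (by decide) (E₄.pow 3) - ModularForm.mcast (by decide) (E₆.pow 2)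
  have hq : qExpansion 1 f = qExpansion 1 E₄ ^ 3 - qExpansion 1 E₆ ^ 2 := by
    simp only [f, FunLike.coe_sub, coe_mcast,
      ModularForm.qExpansion_sub one_pos one_mem_strictPeriods_SL,
      ModularForm.qExpansion_pow one_pos one_mem_strictPeriods_SL]
  have hΔ := ModularForm.qExpansion_smul one_pos one_mem_strictPeriods_SL 1728
      CuspForm.discriminant
  have : ((1728 : ℂ) • CuspForm.discriminant : ℍ → ℂ) = f := by
    ext z
    change (1728 : ℂ) * discriminant z = E₄ z ^ 3 - E₆ z ^ 2
    rw [discriminant_eq_E₄_cube_sub_E₆_sq]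
    ring
  rw [this, hq] at hΔ
  rw [hΔ, PowerSeries.smul_eq_C_mul, map_ofNat]
  rfl

/-- Writing `E₄ = 1 + 240 S₃`, `E₆ = 1 - 504 S₅`, `E₈ = 1 + 480 S₇` with `S_k = ∑ σ_k(m) q^m`,
this is `1728 Δ = E₄³ - E₆²` divided by `144`, with `S₃²` eliminated through `E₈ = E₄²`. -/
lemma twelve_mul_eq (T : ℤ⟦X⟧) (hT : PowerSeries.map (Int.castRingHom ℂ) T =
      UpperHalfPlane.qExpansion 1 ModularForm.discriminant) :
    12 * T = 7 * sigmaSeries 5 - 5 * sigmaSeries 3 + 10 * sigmaSeries 7 +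
      96000 * sigmaSeries 3 ^ 3 - 1764 * sigmaSeries 5 ^ 2 := by
  have b4 : bernoulli 4 = -1 / 30 := by decide +kernel
  have b6 : bernoulli 6 = 1 / 42 := by decide +kernel
  have b8 : bernoulli 8 = -1 / 30 := by decide +kernel
  have h4 := qExpansion_E (by norm_num : 3 ≤ 4) (by decide) 240 (by rw [b4]; norm_num)
  have h6 := qExpansion_E (by norm_num : 3 ≤ 6) (by decide) (-504) (by rw [b6]; norm_num)
  have h8 := qExpansion_E (by norm_num : 3 ≤ 8) (by decide) 480 (by rw [b8]; norm_num)
  have hinj : Function.Injective (PowerSeries.map (Int.castRingHom ℂ)) :=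
    PowerSeries.map_injective _ Int.cast_injective
  have e1 := qExpansion_E_eight
  have e2 := qExpansion_discriminant
  rw [h4, h8, ← map_pow] at e1
  rw [h4, h6, ← hT, ← map_pow, ← map_pow, ← map_sub,
    ← map_ofNat (PowerSeries.map (Int.castRingHom ℂ)) 1728, ← map_mul] at e2
  have e1 := hinj e1
  have e2 := hinj e2
  push_cast at e1 e2
  norm_num at e1 e2
  have h144 : (144 : ℤ⟦X⟧) ≠ 0 := by
    intro h
    have := congrArg (constantCoeff (R := ℤ)) h
    rw [map_ofNat, map_zero] at this
    norm_num at this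
  refine mul_left_cancel₀ h144 ?_
  linear_combination e2 - 3 * e1

/-! ### Divisor sums modulo 9 -/

/-- The contribution modulo `9` of a divisor `d` of `m` to `7 σ₅(m) - 5 σ₃(m) + 10 σ₇(m)`. -/
def divisorWeight (d : ℕ) : ZMod 9 :=
  7 * (d : ZMod 9) ^ 5 - 5 * (d : ZMod 9) ^ 3 + 10 * (d : ZMod 9) ^ 7

/-- Multiplying a divisor by a prime `p ≡ 2 (mod 3)` negates its contribution modulo `9`. -/
lemma divisorWeight_add_mul {p : ℕ} (hp : p % 3 = 2) (e : ℕ) :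
    divisorWeight e + divisorWeight (p * e) = 0 := by
  have key : ∀ x y : ZMod 9, x = 2 ∨ x = 5 ∨ x = 8 →
      (7 * y ^ 5 - 5 * y ^ 3 + 10 * y ^ 7) +
        (7 * (x * y) ^ 5 - 5 * (x * y) ^ 3 + 10 * (x * y) ^ 7) = 0 := by decide
  rw [divisorWeight, divisorWeight, Nat.cast_mul]
  apply key
  have h : (p : ZMod 9) = ((p % 9 : ℕ) : ZMod 9) := (ZMod.natCast_mod p 9).symm
  rw [h]
  have : p % 9 = 2 ∨ p % 9 = 5 ∨ p % 9 = 8 := by lia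
  rcases this with h | h | h <;> rw [h] <;> simp

/-- The divisors `d p^{2i}` and `d p^{2i+1}`, for `d ∣ k` and `i ≤ a`, cancel in pairs. -/
lemma sum_divisorWeight {p : ℕ} (hp : p.Prime) (hp3 : p % 3 = 2) (a : ℕ) {k : ℕ} (hk : ¬ p ∣ k) :
    ∑ d ∈ (p ^ (2 * a + 1) * k).divisors, divisorWeight d = 0 := by
  have hcop : (p ^ (2 * a + 1)).Coprime k :=
    Nat.Coprime.pow_left _ ((Nat.Prime.coprime_iff_not_dvd hp).mpr hk)
  rw [Nat.divisors_mul, Finset.mul_def, Finset.sum_image hcop.mul_injOn_divisors,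
    Finset.sum_product_right]
  refine Finset.sum_eq_zero fun d _ ↦ ?_
  rw [Nat.sum_divisors_prime_pow hp]
  induction a with
  | zero =>
    simpa [Finset.sum_range_succ] using divisorWeight_add_mul hp3 d
  | succ a ih =>
    have h := divisorWeight_add_mul hp3 (p ^ (2 * a + 2) * d)
    rw [← mul_assoc, ← pow_succ'] at h
    have ih := ih (Nat.Coprime.pow_left _ ((Nat.Prime.coprime_iff_not_dvd hp).mpr hk))
    rw [show 2 * (a + 1) + 1 + 1 = (2 * a + 1 + 1) + 1 + 1 by ring, Finset.sum_range_succ,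
      Finset.sum_range_succ, ih, zero_add]
    exact h

/-- The `q`-expansion coefficient `τ(m)` of the discriminant is divisible by `3`
whenever `m` is prime to `3` and some prime `p ≡ 2 (mod 3)` divides `m` to an odd power. -/
lemma three_dvd_coeff (T : ℤ⟦X⟧) (hT : PowerSeries.map (Int.castRingHom ℂ) T =
      UpperHalfPlane.qExpansion 1 ModularForm.discriminant) {p : ℕ} (hp : p.Prime)
    (hp3 : p % 3 = 2) (a : ℕ) {k : ℕ} (hk : ¬ p ∣ k) (h3 : ¬ 3 ∣ p ^ (2 * a + 1) * k) :
    (3 : ℤ) ∣ coeff (p ^ (2 * a + 1) * k) T := by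
  set m := p ^ (2 * a + 1) * k with hm
  have h := congrArg (coeff m) (twelve_mul_eq T hT)
  have hC (c : ℤ) (F : ℤ⟦X⟧) : coeff m ((c : ℤ⟦X⟧) * F) = c * coeff m F := by
    rw [show (c : ℤ⟦X⟧) = C c by simp, coeff_C_mul]
  have h12 := hC 12 T
  have h7 := hC 7 (sigmaSeries 5)
  have h5 := hC 5 (sigmaSeries 3)
  have h10 := hC 10 (sigmaSeries 7)
  have h96 := hC 96000 (sigmaSeries 3 ^ 3)
  have h17 := hC 1764 (sigmaSeries 5 ^ 2)
  push_cast at h12 h7 h5 h10 h96 h17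
  rw [map_sub, map_add, map_add, map_sub, h12, h7, h5, h10, h96, h17] at h
  have hs : (9 : ℤ) ∣ 7 * coeff m (sigmaSeries 5) - 5 * coeff m (sigmaSeries 3) +
      10 * coeff m (sigmaSeries 7) := by
    refine (ZMod.intCast_zmod_eq_zero_iff_dvd _ 9).mp ?_
    rw [← sum_divisorWeight hp hp3 a hk]
    simp only [sigmaSeries, coeff_mk, ArithmeticFunction.sigma_apply, divisorWeight,
      Finset.sum_add_distrib, Finset.sum_sub_distrib, ← Finset.mul_sum]
    push_cast
    rfl
  -- `12 = 3 · 4`, `3 ∣ 96000` and `9 ∣ 1764`, so divisibility by `9` of `12 τ(m)` suffices.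
  have hA := three_dvd_coeff_cube (sigmaSeries 3) h3
  lia

theorem stmt_0 (t : ℕ) (p : Fin (t + 1) → ℕ)
    (hp : ∀ i, Nat.Prime (p i)) (hpm : ∀ i, p i % 3 = 2)
    (n j : ℕ) (hj : 0 < j) (hjd : ¬ p (Fin.last t) ∣ j) :
    B 3 12 (3 * (∏ i, (p i) ^ 2) * n +
      ((∏ i : Fin t, (p i.castSucc) ^ 2) * p (Fin.last t) *
        (p (Fin.last t) + 3 * j) - 1)) ≡ 0 [MOD 3] := by
  -- The integral power series of the values `τ(m)`.
  obtain ⟨T, hT⟩ : ∃ T : ℤ⟦X⟧, PowerSeries.map (Int.castRingHom ℂ) T =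
      UpperHalfPlane.qExpansion 1 ModularForm.discriminant := by
    choose N hN using fun m ↦ (eventually_discPoly_coeff m).exists
    refine ⟨PowerSeries.mk fun m ↦ (discPoly ℤ (N m)).coeff m, ?_⟩
    ext m
    rw [coeff_map, coeff_mk]
    exact hN m
  have hB : ∀ m : ℕ, (B 3 12 m : ZMod 3) = ((coeff (m + 1) T : ℤ) : ZMod 3) := by
    intro m
    obtain ⟨N, h1, h2⟩ := ((eventually_B_eq m).and (eventually_discPoly_coeff (m + 1))).exists
    rw [← hT, coeff_map, eq_intCast, Int.cast_inj] at h2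
    rw [h1, ← coeff_succ_discPoly, ← h2, ← map_discPoly (Int.castRingHom (ZMod 3)),
      Polynomial.coeff_map, eq_intCast]
  rw [Nat.modEq_zero_iff_dvd, ← ZMod.natCast_eq_zero_iff, hB, ZMod.intCast_zmod_eq_zero_iff_dvd]
  rw [Fin.prod_univ_castSucc, Finset.prod_pow]
  set P := ∏ i : Fin t, p i.castSucc with hP
  set q := p (Fin.last t) with hq
  have hqp : q.Prime := hp _
  have hq3 : q % 3 = 2 := hpm _
  have hP3 : ¬ 3 ∣ P := by
    rw [hP, Nat.prime_three.prime.dvd_finsetProd_iff]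
    rintro ⟨i, -, hi⟩
    have := hpm i.castSucc
    lia
  have hP0 : P ≠ 0 := fun h ↦ hP3 (h ▸ dvd_zero 3)
  have hM : ¬ q ∣ 3 * q * n + q + 3 * j := by
    intro h
    rw [Nat.dvd_add_right ⟨3 * n + 1, by ring⟩, hqp.dvd_mul] at h
    rcases h with h | h
    · rw [(Nat.prime_dvd_prime_iff_eq hqp Nat.prime_three).mp h] at hq3
      norm_num at hq3
    · exact hjd h
  obtain ⟨b, P', hP', hPb⟩ := Nat.exists_eq_pow_mul_and_not_dvd hP0 q hqp.ne_one
  have hidx : 3 * (P ^ 2 * q ^ 2) * n + (P ^ 2 * q * (q + 3 * j) - 1) + 1 =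
      q ^ (2 * b + 1) * (P' ^ 2 * (3 * q * n + q + 3 * j)) := by
    have hpos : 1 ≤ P ^ 2 * q * (q + 3 * j) := by
      have := hqp.pos
      have := Nat.pos_of_ne_zero hP0
      exact Nat.succ_le_of_lt (by positivity)
    rw [add_assoc, Nat.sub_add_cancel hpos, hPb]
    ring
  rw [hidx]
  refine three_dvd_coeff T hT hqp hq3 b ?_ ?_
  · rw [hqp.dvd_mul, not_or]
    exact ⟨fun h ↦ hP' (hqp.dvd_of_dvd_pow h), hM⟩
  · have e : q ^ (2 * b + 1) * (P' ^ 2 * (3 * q * n + q + 3 * j)) =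
        P ^ 2 * (q * (3 * (q * n + j) + q)) := by
      rw [hPb]
      ring
    rw [e, Nat.prime_three.dvd_mul, Nat.prime_three.dvd_mul]
    rintro (h | h | h)
    · exact hP3 (Nat.prime_three.dvd_of_dvd_pow h)
    · lia
    · lia
end

section
/- Let t ≥ 0 and let p_1, …, p_{t+1} be prime numbers, each different from 3, with p_i ≡ 3 (mod 4) for each i ∈ {1,…,t+1}. Then for every integer n ≥ 0 and every positive integer j not divisible by p_{t+1}, B_3^{(15)}(3·p_1^2⋯p_{t+1}^2·n + (p_1^2⋯p_t^2·p_{t+1}·(5p_{t+1}+12j) − 5)/4) ≡ 0 (mod 3). -/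
open PowerSeries

/-- Partitions of `k ≤ n` with no part divisible by `ℓ`, seen inside the sigma type that `B` is
defined with. -/
theorem card_fibre (ℓ n k : ℕ) (hk : k ≤ n) :
    (Finset.univ.filter fun x : Σ a : Fin (n + 1), Nat.Partition a =>
      (x.1 : ℕ) = k ∧ ∀ part ∈ x.2.parts, ¬ ℓ ∣ part).card
      = (Nat.Partition.restricted k (¬ ℓ ∣ ·)).card := by
  refine (Finset.card_bij (fun μ _ => ⟨⟨k, Nat.lt_succ_of_le hk⟩, μ⟩) ?_ ?_ ?_).symm
  · intro μ hμ
    simpa [Nat.Partition.restricted] using hμ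
  · intro μ _ ν _ h
    simpa using h
  · rintro ⟨⟨a, ha⟩, μ⟩ h
    simp only [Finset.mem_filter, Finset.mem_univ, true_and] at h
    obtain ⟨rfl, h⟩ := h
    exact ⟨μ, by simpa [Nat.Partition.restricted] using h, rfl⟩

/-- The generating function of `B ℓ r` is the `r`-th power of that of `ℓ`-regular partitions: the
tuples counted by `B` are sorted by the vector of sizes of their components. -/
theorem cast_B (R : Type*) [CommSemiring R] (ℓ r n : ℕ) :
    (B ℓ r n : R) = PowerSeries.coeff n
      ((PowerSeries.mk fun k => ((Nat.Partition.restricted k (¬ ℓ ∣ ·)).card : R)) ^ r) := by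
  classical
  have h := PowerSeries.coeff_prod (R := R)
    (fun _ => PowerSeries.mk fun k => ((Nat.Partition.restricted k (¬ ℓ ∣ ·)).card : R)) n
    (Finset.univ : Finset (Fin r))
  rw [Finset.prod_const, Finset.card_univ, Fintype.card_fin] at h
  rw [h, B, Fintype.card_subtype,
    Finset.card_eq_sum_card_fiberwise (t := Finset.univ.finsuppAntidiag n)
      (f := fun f => Finsupp.equivFunOnFinite.symm fun i => ((f i).1 : ℕ))]
  · push_cast
    refine Finset.sum_congr rfl fun g hg => ?_
    simp only [Finset.mem_finsuppAntidiag, Finset.subset_univ, and_true] at hg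
    simp only [PowerSeries.coeff_mk]
    have hle : ∀ i, g i ≤ n := fun i =>
      hg ▸ Finset.single_le_sum (f := g) (fun _ _ => Nat.zero_le _) (Finset.mem_univ i)
    rw [← Nat.cast_prod, ← Finset.prod_congr rfl fun i _ => card_fibre ℓ n (g i) (hle i),
      ← Fintype.card_piFinset]
    congr 2
    ext f
    simp only [Finset.mem_filter, Finset.mem_univ, true_and, Fintype.mem_piFinset, DFunLike.ext_iff,
      Finsupp.equivFunOnFinite_symm_apply_apply]
    constructor
    · rintro ⟨⟨_, h⟩, h'⟩ i
      exact ⟨h' i, h i⟩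
    · intro h
      refine ⟨⟨?_, fun i => (h i).2⟩, fun i => (h i).1⟩
      exact (Finset.sum_congr rfl fun i _ => (h i).1).trans hg
  · intro f hf
    simpa using (Finset.mem_filter.1 hf).2.1

/-- Modulo 3, the generating function of 3-regular partitions is `∏ (1 - X ^ m) ^ 2`. By Glaisher's
theorem it is `∏ (1 + X ^ m + X ^ (2 * m))`, and `1 + Y + Y ^ 2 = (1 - Y) ^ 2` modulo 3. -/
theorem gen_eq : (PowerSeries.mk fun k => ((Nat.Partition.restricted k (¬ 3 ∣ ·)).card : ZMod 3))
    = pentagonalSeries (ZMod 3) ^ 2 := by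
  open scoped PowerSeries.WithPiTopology in
  let _ : TopologicalSpace (ZMod 3) := ⊥
  have _ : DiscreteTopology (ZMod 3) := ⟨rfl⟩
  rw [Nat.Partition.powerSeriesMk_card_restricted_eq_powerSeriesMk_card_countRestricted
    (ZMod 3) (by norm_num : 0 < 3)]
  refine (Nat.Partition.hasProd_powerSeriesMk_card_countRestricted (ZMod 3)
    (by norm_num : 0 < 3)).unique ?_
  have h := WithPiTopology.hasProd_one_sub_X_pow (ZMod 3)
  rw [sq]
  convert! h.mul h using 2 with i
  have h3 : (3 : PowerSeries (ZMod 3)) = 0 := by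
    rw [← map_ofNat (C (R := ZMod 3)) 3, show (OfNat.ofNat 3 : ZMod 3) = 0 from rfl, map_zero]
  simp only [Finset.sum_range_succ, Finset.sum_range_zero, pow_mul]
  linear_combination (X ^ (i + 1)) * h3

/-- Cubing a power series over `ZMod 3` substitutes `X ^ 3` for `X`. -/
theorem cube_eq_expand (f : PowerSeries (ZMod 3)) : f ^ 3 = expand 3 (by norm_num) f := by
  have h := MvPowerSeries.map_frobenius_expand 3 (by norm_num)
    (f := (f : MvPowerSeries Unit (ZMod 3)))
  rw [ZMod.frobenius_zmod, MvPowerSeries.map_id] at h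
  exact h.symm

/-- If `E = ∏ (1 - X ^ m)`, then modulo 3 the series `E ^ 30 = E ^ 3 * E ^ 27` equals
`E(X ^ 3) * E(X ^ 27)`. Its exponents are `n = 3 * a + 27 * b` with `a`, `b` pentagonal, and
completing squares gives `8 * n + 10 = x ^ 2 + (3 * y) ^ 2` with `x = 6 * k - 1`, `y = 6 * l - 1`. -/
theorem exists_of_coeff {n : ℕ}
    (h : coeff n (pentagonalSeries (ZMod 3) ^ 30) ≠ 0) :
    ∃ x y : ℕ, 8 * n + 10 = x ^ 2 + y ^ 2 := by
  have e : pentagonalSeries (ZMod 3) ^ 30 = expand 3 (by norm_num) (pentagonalSeries (ZMod 3))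
    * expand 27 (by norm_num) (pentagonalSeries (ZMod 3)) := by
    have := expand_mul (R := ZMod 3) 3 (by norm_num) 9 (by norm_num) (pentagonalSeries (ZMod 3))
    have h2 := expand_mul (R := ZMod 3) 3 (by norm_num) 3 (by norm_num) (pentagonalSeries (ZMod 3))
    norm_num at this h2
    rw [this, h2, ← cube_eq_expand, ← cube_eq_expand, ← cube_eq_expand]
    ring
  rw [e, coeff_mul] at h
  obtain ⟨⟨a, b⟩, hab, h⟩ := Finset.exists_ne_zero_of_sum_ne_zero h
  rw [Finset.HasAntidiagonal.mem_antidiagonal] at hab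
  -- `24 * (k * (3 * k - 1) / 2) + 1 = (6 * k - 1) ^ 2`
  have key : ∀ m (hm : m ≠ 0) c, coeff c (expand m hm (pentagonalSeries (ZMod 3))) ≠ 0 →
      ∃ k : ℤ, 24 * (c : ℤ) = m * ((6 * k - 1) ^ 2 - 1) := by
    intro m hm c hc
    by_cases hd : m ∣ c
    · obtain ⟨d, rfl⟩ := hd
      rw [coeff_expand_mul, ne_eq, coeff_pentagonalSeries_eq_zero_iff, not_not] at hc
      obtain ⟨k, rfl⟩ := hc
      refine ⟨k, ?_⟩
      push_cast
      linear_combination 12 * (m : ℤ) * two_mul_natCast_pentagonal k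
    · exact absurd (coeff_expand_of_not_dvd _ _ _ hd) hc
  obtain ⟨k, hk⟩ := key _ _ _ (left_ne_zero_of_mul h)
  obtain ⟨l, hl⟩ := key _ _ _ (right_ne_zero_of_mul h)
  refine ⟨(6 * k - 1).natAbs, (3 * (6 * l - 1)).natAbs, ?_⟩
  zify
  rw [sq_abs, sq_abs]
  have hab' : (a : ℤ) + b = n := by exact_mod_cast hab
  push_cast at hk hl
  linarith

/-- A number divisible by a prime `p ≡ 3 (mod 4)` to an odd power is not a sum of two squares. -/
theorem not_sq_add_sq {p m s : ℕ} (hp : p.Prime) (h4 : p % 4 = 3) (hm : ¬ p ∣ m) (hs : s ≠ 0) :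
    ¬ ∃ x y : ℕ, s ^ 2 * p * m = x ^ 2 + y ^ 2 := by
  intro h
  have : Fact p.Prime := ⟨hp⟩
  have hm0 : m ≠ 0 := by rintro rfl; simp at hm
  have h0 : s ^ 2 * p * m ≠ 0 := by simp [hs, hm0, hp.ne_zero]
  have := Nat.eq_sq_add_sq_iff.1 h p
    (Nat.mem_primeFactors.2 ⟨hp, ⟨s ^ 2 * m, by ring⟩, h0⟩) h4
  rw [padicValNat.mul (by simp [hs, hp.ne_zero]) hm0, padicValNat.mul (by simp [hs]) hp.ne_zero,
    padicValNat.pow, padicValNat.self hp.one_lt, padicValNat.eq_zero_of_not_dvd hm] at this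
  grind

theorem stmt_1 (t : ℕ) (p : Fin (t + 1) → ℕ)
    (hp : ∀ i, Nat.Prime (p i)) (hp3 : ∀ i, p i ≠ 3) (hpm : ∀ i, p i % 4 = 3)
    (n j : ℕ) (hj : 0 < j) (hjd : ¬ p (Fin.last t) ∣ j) :
    B 3 15 (3 * (∏ i, (p i) ^ 2) * n +
      ((∏ i : Fin t, (p i.castSucc) ^ 2) * p (Fin.last t) *
        (5 * p (Fin.last t) + 12 * j) - 5) / 4) ≡ 0 [MOD 3] := by
  rw [Nat.modEq_zero_iff_dvd, ← ZMod.natCast_eq_zero_iff, cast_B, gen_eq, ← pow_mul]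
  by_contra h
  have h := exists_of_coeff h
  rw [Fin.prod_univ_castSucc, Finset.prod_pow] at h
  set s := ∏ i : Fin t, p i.castSucc with hs
  set q := p (Fin.last t) with hq
  have hs0 : s ≠ 0 := Finset.prod_ne_zero_iff.2 fun i _ => (hp _).ne_zero
  have hq4 : q % 4 = 3 := hpm _
  have hs2 : s % 2 = 1 := by
    rw [← Nat.odd_iff]
    refine Finset.prod_induction _ Odd (fun _ _ => Odd.mul) odd_one fun i _ => ?_
    have := hpm i.castSucc
    rw [Nat.odd_iff]; omega
  -- The numerator is congruent to `1` modulo `4` and at least `5`, so neither the subtraction nor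
  -- the division in the argument of `B` loses anything.
  have hmod : s ^ 2 * q * (5 * q + 12 * j) % 4 = 1 := by
    have h1 : s ^ 2 % 4 = 1 := by
      rcases (by omega : s % 4 = 1 ∨ s % 4 = 3) with h | h <;> simp [Nat.pow_mod, h]
    have h2 : (5 * q + 12 * j) % 4 = 3 := by omega
    simp [Nat.mul_mod, h1, h2, hq4]
  have hge : 5 ≤ s ^ 2 * q * (5 * q + 12 * j) := by
    have : 1 ≤ s ^ 2 * q := Nat.pos_of_ne_zero (by simp [hs0, (hp (Fin.last t)).ne_zero, hq])
    nlinarith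
  -- With `N` the argument of `B`, one has
  -- `8 * N + 10 = s ^ 2 * q * (2 * (12 * q * n + 5 * q + 12 * j))`.
  refine not_sq_add_sq (hp (Fin.last t)) hq4 (m := 2 * (12 * q * n + (5 * q + 12 * j))) ?_ hs0
    (by
      convert h using 5
      have : 8 * ((s ^ 2 * q * (5 * q + 12 * j) - 5) / 4) + 10
        = 2 * (s ^ 2 * q * (5 * q + 12 * j)) := by omega
      rw [mul_add 8, add_assoc, this]; ring)
  have hqp : q.Prime := hp _
  have h5 : 5 ≤ q := by have := hp3 (Fin.last t); omega
  intro hd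
  have hd : q ∣ 24 * j := by
    rw [show 2 * (12 * q * n + (5 * q + 12 * j)) = q * (24 * n + 10) + 24 * j by ring] at hd
    exact (Nat.dvd_add_right (dvd_mul_right _ _)).1 hd
  rcases (hqp.dvd_mul).1 hd with hd | hd
  · rw [show 24 = 2 ^ 3 * 3 by norm_num, hqp.dvd_mul] at hd
    rcases hd with hd | hd
    · have := Nat.le_of_dvd (by norm_num) (hqp.dvd_of_dvd_pow hd); omega
    · have := Nat.le_of_dvd (by norm_num) hd; omega
  · exact hjd hd
end

section
/- Let t ≥ 0 and let p_1, …, p_{t+1} be prime numbers, each different from 5, with p_i ≡ 2 (mod 3) for each i ∈ {1,…,t+1}. Then for every integer n ≥ 0 and every positive integer j not divisible by p_{t+1}, B_5^{(10)}(5·p_1^2⋯p_{t+1}^2·n + 5·(p_1^2⋯p_t^2·p_{t+1}·(p_{t+1}+3j) − 1)/3) ≡ 0 (mod 5). -/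
namespace EulerEighth

open PowerSeries PowerSeries.WithPiTopology

/-! ### The norm form a² − ab + b² and primes congruent to 2 mod 3 -/

/-- Cubing is injective modulo a prime `p ≡ 2 (mod 3)`: an inverse is `y ↦ y ^ (2 * k + 1)`,
where `p = 3 * k + 2`. -/
theorem eq_neg_of_cube {p : ℕ} [Fact p.Prime] (hp : p % 3 = 2) (a b : ZMod p)
    (h : a ^ 3 = - b ^ 3) : a = -b := by
  obtain ⟨k, hk⟩ : ∃ k, p = 3 * k + 2 := ⟨p / 3, by omega⟩
  have key : ∀ x : ZMod p, (x ^ 3) ^ (2 * k + 1) = x := by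
    intro x
    have h1 : x ^ p = x := ZMod.pow_card x
    calc (x ^ 3) ^ (2 * k + 1) = x ^ (p + 3 * k + 1) := by
          rw [← pow_mul]; congr 1; omega
      _ = x ^ p * x ^ (3 * k + 1) := by ring
      _ = x ^ (3 * k + 2) := by rw [h1]; ring
      _ = x := by rw [← hk, h1]
  rw [← key a, h, ← neg_one_mul, mul_pow, key b]
  simp [pow_succ, pow_mul]

/-- Primes `p ≡ 2 (mod 3)` are inert in the Eisenstein integers. The proof uses
`a ^ 3 + b ^ 3 = (a + b) * (a ^ 2 - a * b + b ^ 2)` and injectivity of cubing. -/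
theorem dvd_of_dvd_norm {p : ℕ} (hpp : p.Prime) (hp : p % 3 = 2) (a b : ℤ)
    (h : (p : ℤ) ∣ a ^ 2 - a * b + b ^ 2) : (p : ℤ) ∣ a ∧ (p : ℤ) ∣ b := by
  have : Fact p.Prime := ⟨hpp⟩
  have h0 : ((a : ZMod p)) ^ 2 - a * b + b ^ 2 = 0 := by
    have := (ZMod.intCast_zmod_eq_zero_iff_dvd (a ^ 2 - a * b + b ^ 2) p).2 h
    push_cast at this; exact this
  have h1 : (a : ZMod p) = -b := by
    apply eq_neg_of_cube hp
    linear_combination ((a : ZMod p) + b) * h0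
  have h3 : (3 : ZMod p) * (b : ZMod p) ^ 2 = 0 := by
    rw [h1] at h0; linear_combination h0
  have h3' : (3 : ZMod p) ≠ 0 := by
    intro h
    have : p ∣ 3 := (ZMod.natCast_eq_zero_iff 3 p).1 (by exact_mod_cast h)
    have := (Nat.prime_dvd_prime_iff_eq hpp Nat.prime_three).1 this
    omega
  have hb : (b : ZMod p) = 0 := by simpa [h3'] using h3
  have ha : (a : ZMod p) = 0 := by simp [h1, hb]
  exact ⟨(ZMod.intCast_zmod_eq_zero_iff_dvd _ _).1 ha, (ZMod.intCast_zmod_eq_zero_iff_dvd _ _).1 hb⟩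

/-- The form `a ^ 2 - a * b + b ^ 2` represents only numbers in which a prime
`p ≡ 2 (mod 3)` has even exponent; the descent divides `a`, `b` and `Q` by `p`. -/
theorem norm_ne {p : ℕ} (hpp : p.Prime) (hp : p % 3 = 2) {m : ℤ} (hm : ¬ (p : ℤ) ∣ m) :
    ∀ (Q : ℕ), 0 < Q → ∀ a b : ℤ, a ^ 2 - a * b + b ^ 2 ≠ (Q : ℤ) ^ 2 * p * m := by
  have hpz : Prime (p : ℤ) := Nat.prime_iff_prime_int.1 hpp
  intro Q
  induction Q using Nat.strong_induction_on with
  | _ Q ih =>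
    intro hQ a b h
    obtain ⟨⟨a', rfl⟩, ⟨b', rfl⟩⟩ := dvd_of_dvd_norm hpp hp a b
      (h ▸ Dvd.intro_left ((Q : ℤ) ^ 2 * m) (by ring))
    have h2 : (p : ℤ) * (a' ^ 2 - a' * b' + b' ^ 2) = (Q : ℤ) ^ 2 * m :=
      mul_left_cancel₀ hpz.ne_zero (by linear_combination h)
    have h3 : (p : ℤ) ∣ (Q : ℤ) ^ 2 * m := Dvd.intro _ h2
    have h4 : (p : ℤ) ∣ (Q : ℤ) :=
      hpz.dvd_of_dvd_pow ((hpz.dvd_or_dvd h3).resolve_right hm)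
    obtain ⟨Q', rfl⟩ := Int.natCast_dvd_natCast.1 h4
    have hQ' : 0 < Q' := Nat.pos_of_mul_pos_left hQ
    refine ih Q' ?_ hQ' a' b' ?_
    · nlinarith [hpp.two_le]
    · apply mul_left_cancel₀ hpz.ne_zero
      push_cast at h2
      linear_combination h2

/-! ### Power series as sums of monomials -/

theorem C_mul_mon (n : ℕ) (a b : ℤ) :
    (C a : ℤ⟦X⟧) * monomial n b = monomial n (a * b) := by
  rw [← monomial_zero_eq_C_apply, monomial_mul_monomial, zero_add]

theorem summable_monomial {ι : Type*} (e : ι → ℕ) (w : ι → ℤ)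
    (h : ∀ N, {i | e i ≤ N}.Finite) : Summable fun i => (monomial (e i) (w i) : ℤ⟦X⟧) := by
  rw [summable_iff_summable_coeff]
  intro d
  refine summable_of_hasFiniteSupport ((h d).subset ?_)
  intro i hi
  simp only [Function.mem_support, coeff_monomial] at hi
  by_contra hne
  simp only [Set.mem_ofPred_eq, not_le] at hne
  exact hi (if_neg (by omega))

theorem finite_le_add {ι κ : Type*} {e : ι → ℕ} {e' : κ → ℕ} (h : ∀ N, {i | e i ≤ N}.Finite)
    (h' : ∀ N, {i | e' i ≤ N}.Finite) (N : ℕ) : {i : ι × κ | e i.1 + e' i.2 ≤ N}.Finite := by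
  refine ((h N).prod (h' N)).subset ?_
  rintro ⟨i, j⟩ hij
  simp only [Set.mem_ofPred_eq, Set.mem_prod] at *
  omega

theorem hasSum_mul_monomial {ι κ : Type*} {e : ι → ℕ} {e' : κ → ℕ} {w : ι → ℤ} {w' : κ → ℤ}
    (h : ∀ N, {i | e i ≤ N}.Finite) (h' : ∀ N, {i | e' i ≤ N}.Finite) {F G : ℤ⟦X⟧}
    (hF : HasSum (fun i => monomial (e i) (w i)) F)
    (hG : HasSum (fun i => monomial (e' i) (w' i)) G) :
    HasSum (fun i : ι × κ => monomial (e i.1 + e' i.2) (w i.1 * w' i.2)) (F * G) := by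
  have := hF.mul hG (by
    simp only [monomial_mul_monomial]
    exact summable_monomial _ _ (finite_le_add h h'))
  simpa only [monomial_mul_monomial] using this

theorem hasSum_X_mul_derivative {ι : Type*} {e : ι → ℕ} {w : ι → ℤ} {F : ℤ⟦X⟧}
    (hF : HasSum (fun i => monomial (e i) (w i)) F) :
    HasSum (fun i => monomial (e i) (e i * w i)) (X * d⁄dX ℤ F) := by
  rw [hasSum_iff_hasSum_coeff] at hF ⊢
  intro d
  have h1 : coeff d (X * d⁄dX ℤ F) = d * coeff d F := by
    cases d with
    | zero => simp
    | succ d => rw [coeff_succ_X_mul, coeff_derivative]; push_cast; ring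
  rw [h1]
  refine ((hF d).mul_left (d : ℤ)).congr_fun ?_
  intro i
  simp only [coeff_monomial]
  split_ifs with h <;> simp [h]

/-! ### Theta series and the Jacobi identity -/

/-- The triangular number `k (k + 1) / 2`, which is nonnegative for every integer `k`. -/
def tri (k : ℤ) : ℕ := (k * (k + 1) / 2).toNat

theorem two_mul_tri (k : ℤ) : 2 * (tri k : ℤ) = k * (k + 1) := by
  have h0 : 0 ≤ k * (k + 1) := by
    rcases le_or_gt 0 k with h | h <;> nlinarith
  have h1 : k * (k + 1) % 2 = 0 := Int.even_iff.1 (Int.even_mul_succ_self k)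
  unfold tri
  omega

theorem tri_eq_iff_neg (k : ℤ) : tri (-1 - k) = tri k := by
  have h1 := two_mul_tri k
  have h2 := two_mul_tri (-1 - k)
  have : (-1 - k) * (-1 - k + 1) = k * (k + 1) := by ring
  omega

theorem finite_tri (N : ℕ) : {k : ℤ | tri k ≤ N}.Finite := by
  refine (Set.finite_Icc (-(N : ℤ) - 1) N).subset fun k hk => ?_
  simp only [Set.mem_ofPred_eq] at hk
  have h := two_mul_tri k
  have hk' : (tri k : ℤ) ≤ N := by exact_mod_cast hk
  rw [Set.mem_Icc]
  constructor <;> nlinarith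

theorem finite_pentagonal (N : ℕ) : {k : ℤ | pentagonal k ≤ N}.Finite := by
  refine (Set.finite_Icc (-(N : ℤ)) N).subset fun k hk => ?_
  simp only [Set.mem_ofPred_eq] at hk
  have h := two_mul_natCast_pentagonal k
  have hk' : (pentagonal k : ℤ) ≤ N := by exact_mod_cast hk
  rw [Set.mem_Icc]
  constructor <;> nlinarith

/-- The sign `(-1) ^ k` as an integer. -/
def sg (k : ℤ) : ℤ := (Int.negOnePow k : ℤ)

theorem sg_even {k : ℤ} (h : Even k) : sg k = 1 := by simp [sg, Int.negOnePow_even k h]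
theorem sg_odd {k : ℤ} (h : Odd k) : sg k = -1 := by simp [sg, Int.negOnePow_odd k h]
theorem sg_add (k l : ℤ) : sg (k + l) = sg k * sg l := by simp [sg, Int.negOnePow_add]

/-- Euler's product `f = ∏ (1 - q ^ n)`, given as the series `∑ (-1) ^ k q ^ (k (3 k - 1) / 2)`
of the pentagonal number theorem. -/
noncomputable abbrev eu : ℤ⟦X⟧ := pentagonalSeries ℤ

theorem hasSum_eu : HasSum (fun k : ℤ => monomial (pentagonal k) (sg k)) eu := by
  convert hasSum_pentagonalSeries ℤ using 2 with k
  rw [monomial_eq_C_mul_X_pow]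
  simp [sg]

/-- The theta moments `∑ (-1) ^ k (2 k + 1) ^ i q ^ (k (k + 1) / 2)`, over all integers `k`. -/
noncomputable def K (i : ℕ) : ℤ⟦X⟧ := ∑' k : ℤ, monomial (tri k) (sg k * (2 * k + 1) ^ i)

theorem hasSum_K (i : ℕ) : HasSum (fun k : ℤ => monomial (tri k) (sg k * (2 * k + 1) ^ i)) (K i) :=
  (summable_monomial _ _ finite_tri).hasSum

theorem eq_zero_of_hasSum_involutive {ι : Type*} {g : ι → ℤ⟦X⟧} {S : ℤ⟦X⟧} (h : HasSum g S)
    {σ : ι → ι} (hσ : Function.Involutive σ) (hg : ∀ i, g (σ i) = - g i) : S = 0 := by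
  have h1 : HasSum (fun i => g (σ i)) S := (hσ.toPerm.hasSum_iff).2 h
  simp only [hg] at h1
  have := h1.unique h.neg
  ext n
  have h2 := congrArg (coeff n) this
  rw [map_neg] at h2
  rw [map_zero]
  omega

/-- The even moments vanish under `k ↦ -1 - k`. -/
theorem K_even {i : ℕ} (hi : Even i) : K i = 0 := by
  refine eq_zero_of_hasSum_involutive (hasSum_K i) (σ := fun k => -1 - k)
    (fun k => by ring) fun k => ?_
  rw [tri_eq_iff_neg, ← map_neg]
  congr 1
  have h1 : (2 * (-1 - k) + 1) ^ i = (2 * k + 1) ^ i := by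
    rw [← hi.neg_pow]; congr 1; ring
  have h2 : sg (-1 - k) = - sg k := by
    rw [show -1 - k = k + (-2 * k - 1) by ring, sg_add,
      sg_odd (k := -2 * k - 1) (by rw [Int.odd_iff]; omega)]
    ring
  rw [h1, h2]; ring

/-- A reflection of the lattice indexing the products of terms of `eu` and `K 1`. For a pair
`(m, k)` put `z = 6 m - 1` and `y = 2 k + 1`, so that the exponent of the product is determined by
`z ^ 2 + 3 y ^ 2`. The map is `(z, y) ↦ (-(z + 3 y) / 2, (y - z) / 2)` if `m + k` is even, and the
conjugate of this by `y ↦ -y` if `m + k` is odd; both preserve `z ^ 2 + 3 y ^ 2` and change the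
sign of `y (y ^ 2 - z ^ 2)`. -/
def hexRefl (x : ℤ × ℤ) : ℤ × ℤ :=
  if (x.1 + x.2) % 2 = 0 then (-((x.1 + x.2) / 2), (x.2 - 3 * x.1) / 2)
  else (-((x.1 - 1 - x.2) / 2), -1 - (-1 - x.2 - 3 * x.1) / 2)

theorem hexRefl_involutive : Function.Involutive hexRefl := by
  rintro ⟨m, k⟩
  simp only [hexRefl]
  split_ifs <;> simp only [Prod.mk.injEq] <;> omega

/-- The logarithmic derivative of `K 1` is three times that of `eu`. The coefficients of the
difference of the two sides are sums of terms `± y (y ^ 2 - z ^ 2)`, in the notation of `hexRefl`,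
and these cancel in pairs. -/
theorem K_ode : eu * (X * d⁄dX ℤ (K 1)) = 3 * ((X * d⁄dX ℤ eu) * K 1) := by
  have h1 := hasSum_mul_monomial finite_pentagonal finite_tri hasSum_eu
    (hasSum_X_mul_derivative (hasSum_K 1))
  have h2 := hasSum_mul_monomial finite_pentagonal finite_tri
    (hasSum_X_mul_derivative hasSum_eu) (hasSum_K 1)
  have h3 := h1.sub (h2.mul_left 3)
  rw [← sub_eq_zero]
  refine eq_zero_of_hasSum_involutive h3 hexRefl_involutive ?_
  have key : ∀ m k : ℤ, (monomial (pentagonal m + tri k)) (sg m * (tri k * (sg k * (2 * k + 1) ^ 1))) -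
      (3 : ℤ⟦X⟧) * (monomial (pentagonal m + tri k)) (pentagonal m * sg m * (sg k * (2 * k + 1) ^ 1))
      = monomial (pentagonal m + tri k)
        (sg (m + k) * ((2 * k + 1) * (tri k - 3 * pentagonal m))) := by
    intro m k
    rw [show (3 : ℤ⟦X⟧) = C (3 : ℤ) by simp, C_mul_mon, ← map_sub, sg_add]
    congr 1; ring
  rintro ⟨m, k⟩
  simp only [key]
  -- `red` compares weights and exponents after clearing the denominators of `tri` and `pentagonal`.
  have red : ∀ m k m' k' : ℤ, sg (m + k) = sg (m' + k') →
      m' * (3 * m' - 1) + k' * (k' + 1) = m * (3 * m - 1) + k * (k + 1) →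
      (2 * k' + 1) * (k' * (k' + 1) - 3 * (m' * (3 * m' - 1))) =
        -((2 * k + 1) * (k * (k + 1) - 3 * (m * (3 * m - 1)))) →
      (monomial (pentagonal m' + tri k')
        (sg (m' + k') * ((2 * k' + 1) * (tri k' - 3 * pentagonal m'))) : ℤ⟦X⟧) =
      -monomial (pentagonal m + tri k)
        (sg (m + k) * ((2 * k + 1) * (tri k - 3 * pentagonal m))) := by
    intro m k m' k' hs he hw
    simp only [← two_mul_tri, ← two_mul_natCast_pentagonal] at he hw
    rw [← map_neg, hs, show pentagonal m' + tri k' = pentagonal m + tri k by omega]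
    congr 1
    have : (2 * k' + 1) * (tri k' - 3 * pentagonal m') =
        -((2 * k + 1) * (tri k - 3 * pentagonal m)) := by linarith
    rw [this]; ring
  rcases Int.even_or_odd' (m + k) with ⟨u, hu | hu⟩
  · obtain rfl : k = 2 * u - m := by omega
    have : hexRefl (m, 2 * u - m) = (-u, u - 2 * m) := by
      simp only [hexRefl]; rw [if_pos (by omega)]; ext <;> simp <;> omega
    rw [this]
    refine red _ _ _ _ ?_ (by ring) (by ring)
    rw [sg_even (by rw [Int.even_iff]; omega), sg_even (by rw [Int.even_iff]; omega)]
  · obtain rfl : k = 2 * u + 1 - m := by omega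
    have : hexRefl (m, 2 * u + 1 - m) = (-(m - 1 - u), m + u) := by
      simp only [hexRefl]; rw [if_neg (by omega)]; ext <;> simp <;> omega
    rw [this]
    refine red _ _ _ _ ?_ (by ring) (by ring)
    rw [sg_odd (by rw [Int.odd_iff]; omega), sg_odd (by rw [Int.odd_iff]; omega)]

theorem constantCoeff_eu : constantCoeff eu = 1 := by
  have := coeff_pentagonalSeries_pentagonal ℤ 0
  simpa [pentagonal_def] using this

theorem constantCoeff_K : constantCoeff (K 1) = 2 := by
  have h := (hasSum_iff_hasSum_coeff _).1 (hasSum_K 1) 0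
  have h2 := hasSum_sum_of_ne_finset_zero (L := .unconditional ℤ) (s := {0, -1})
    (f := fun k : ℤ => coeff 0 (monomial (tri k) (sg k * (2 * k + 1) ^ 1) : ℤ⟦X⟧)) (by
      intro k hk
      simp only [Finset.mem_insert, Finset.mem_singleton, not_or] at hk
      rw [coeff_monomial, if_neg]
      intro h0
      have h1 := two_mul_tri k
      rw [← h0] at h1
      have h2 : k * (k + 1) = 0 := by simpa using h1.symm
      rcases mul_eq_zero.1 h2 with h | h <;> omega)
  rw [← coeff_zero_eq_constantCoeff_apply, h.unique h2]
  simp [tri, coeff_monomial, sg]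

theorem exists_inv_eu : ∃ g : ℤ⟦X⟧, eu * g = 1 := by
  have : IsUnit eu := by
    rw [isUnit_iff_constantCoeff, constantCoeff_eu]; exact isUnit_one
  exact this.exists_right_inv

/-- Jacobi's identity for the cube of Euler's product. The factor 2 arises because the sum runs
over all integers `k`, not only `k ≥ 0`. -/
theorem K_one : K 1 = 2 * eu ^ 3 := by
  obtain ⟨g, hg⟩ := exists_inv_eu
  have hode : eu * d⁄dX ℤ (K 1) = 3 * (d⁄dX ℤ eu * K 1) := by
    apply mul_left_cancel₀ (X_ne_zero (R := ℤ))
    linear_combination K_ode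
  have hdg : d⁄dX ℤ eu * g + eu * d⁄dX ℤ g = 0 := by
    have := congrArg (d⁄dX ℤ) hg
    rw [Derivation.leibniz, Derivation.map_one_eq_zero] at this
    simp only [smul_eq_mul] at this
    linear_combination this
  have hgc : constantCoeff g = 1 := by
    have := congrArg constantCoeff hg
    simpa [constantCoeff_eu] using this
  have hconst : K 1 * g ^ 3 = 2 := by
    refine derivative.ext ?_ ?_
    · have h2 : d⁄dX ℤ (2 : ℤ⟦X⟧) = 0 := by
        rw [show (2 : ℤ⟦X⟧) = C (2 : ℤ) by simp, derivative_C]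
      rw [h2, Derivation.leibniz, Derivation.leibniz_pow]
      simp only [smul_eq_mul, nsmul_eq_mul]
      push_cast
      linear_combination (-(g ^ 3) * d⁄dX ℤ (K 1) - 3 * K 1 * g ^ 2 * d⁄dX ℤ g) * hg
        + g ^ 4 * hode + 3 * K 1 * g ^ 3 * hdg
    · simp only [map_mul, map_pow, constantCoeff_K, hgc, one_pow, mul_one, map_ofNat]
  linear_combination eu ^ 3 * hconst - K 1 * (eu ^ 2 * g ^ 2 + eu * g + 1) * hg

/-! ### The eighth power of the Euler product -/

theorem hasSum_mul_mul_monomial {ι : Type*} {e : ι → ℕ} {u v w : ι → ℤ}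
    (h : ∀ N, {i | e i ≤ N}.Finite) {F G H : ℤ⟦X⟧}
    (hF : HasSum (fun i => monomial (e i) (u i)) F)
    (hG : HasSum (fun i => monomial (e i) (v i)) G)
    (hH : HasSum (fun i => monomial (e i) (w i)) H) :
    HasSum (fun x : (ι × ι) × ι => (monomial (e x.1.1 + e x.1.2 + e x.2)
      (u x.1.1 * v x.1.2 * w x.2) : ℤ⟦X⟧)) (F * G * H) :=
  hasSum_mul_monomial (e := fun x : ι × ι => e x.1 + e x.2)
    (w := fun x : ι × ι => u x.1 * v x.2) (finite_le_add h h) h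
    (hasSum_mul_monomial h h hF hG) hH

theorem hasSum_KKK (i j l : ℕ) : HasSum (fun x : (ℤ × ℤ) × ℤ =>
      (monomial (tri x.1.1 + tri x.1.2 + tri x.2)
      ((sg x.1.1 * (2 * x.1.1 + 1) ^ i) * (sg x.1.2 * (2 * x.1.2 + 1) ^ j) *
        (sg x.2 * (2 * x.2 + 1) ^ l)) : ℤ⟦X⟧)) (K i * K j * K l) := by
  have h := hasSum_mul_mul_monomial finite_tri (hasSum_K i) (hasSum_K j) (hasSum_K l)
  with_reducible exact h

/-- With `y = 2 k + 1`, the weight is `(y₁ - y₃) ^ 2 (y₂ - y₃)`. Expanded into monomials, only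
`-2 y₁ y₂ y₃` survives, as every other monomial involves an even moment of `K`; hence the sum
is `-2 (K 1) ^ 3`. -/
theorem hasSum_cubic : HasSum (fun x : (ℤ × ℤ) × ℤ =>
      (monomial (tri x.1.1 + tri x.1.2 + tri x.2)
      (sg (x.1.1 + x.1.2 + x.2) * (8 * ((x.1.1 - x.2) ^ 2 * (x.1.2 - x.2)))) : ℤ⟦X⟧)) (-16 * eu ^ 9) := by
  have h := ((((((hasSum_KKK 2 1 0).sub (hasSum_KKK 2 0 1)).sub
    ((hasSum_KKK 1 1 1).mul_left (C 2))).add ((hasSum_KKK 1 0 2).mul_left (C 2))).add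
    (hasSum_KKK 0 1 2)).sub (hasSum_KKK 0 0 3))
  rw [K_even (i := 0) (by decide), K_even (i := 2) (by decide), K_one] at h
  convert! h using 1
  · funext x
    simp only [C_mul_mon, ← map_sub, ← map_add, sg_add]
    congr 1
    ring
  · rw [show (C 2 : ℤ⟦X⟧) = 2 by simp]; ring

/-- The coordinates `(a, b, c) ↦ (a + c, b + c, c)` on triples of integers, in which the weight of
`hasSum_cubic` depends on `a` and `b` only, up to sign. -/
def shear : (ℤ × ℤ) × ℤ ≃ (ℤ × ℤ) × ℤ where
  toFun x := ((x.1.1 + x.2, x.1.2 + x.2), x.2)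
  invFun x := ((x.1.1 - x.2, x.1.2 - x.2), x.2)
  left_inv x := by simp
  right_inv x := by simp

theorem hasSum_sheared : HasSum (fun x : (ℤ × ℤ) × ℤ =>
      (monomial (tri (x.1.1 + x.2) + tri (x.1.2 + x.2) + tri x.2)
      (sg (x.1.1 + x.1.2 + x.2) * (8 * (x.1.1 ^ 2 * x.1.2))) : ℤ⟦X⟧)) (-16 * eu ^ 9) := by
  have h := shear.hasSum_iff.2 hasSum_cubic
  convert! h using 1
  funext x
  simp only [Function.comp, shear, Equiv.coe_fn_mk, add_sub_cancel_right]
  rw [show x.1.1 + x.2 + (x.1.2 + x.2) + x.2 = x.1.1 + x.1.2 + x.2 + 2 * x.2 by ring,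
    sg_add _ (2 * x.2), sg_even (k := 2 * x.2) (by simp), mul_one]

/-- For fixed `a` and `b` the sum over `c` is zero if `3 ∣ a + b`, by the symmetry
`c ↦ -(2 r + 1) - c` with `a + b = 3 r`. Otherwise completing the square turns it into
`eu` times a monomial whose exponent `E` satisfies `3 E + 1 = a ^ 2 - a b + b ^ 2`. -/
theorem fiber_sum (a b : ℤ) : ∃ F : ℤ⟦X⟧,
    HasSum (fun c : ℤ => (monomial (tri (a + c) + tri (b + c) + tri c)
      (sg (a + b + c) * (8 * (a ^ 2 * b))) : ℤ⟦X⟧)) (eu * F) ∧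
    ∀ N : ℕ, coeff N F ≠ 0 → (3 * N + 1 : ℤ) = a ^ 2 - a * b + b ^ 2 := by
  -- `σ` matches the exponents, up to the shift `E`, with the generalized pentagonal numbers.
  have hns : ∀ (E : ℤ) (w : ℤ) (σ : ℤ ≃ ℤ), 3 * E + 1 = a ^ 2 - a * b + b ^ 2 →
      (∀ c, tri (a + c) + tri (b + c) + tri c = pentagonal (σ c) + E) →
      (∀ c, sg (a + b + c) = sg (σ c) * w) → ∃ F : ℤ⟦X⟧,
    HasSum (fun c : ℤ => (monomial (tri (a + c) + tri (b + c) + tri c)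
      (sg (a + b + c) * (8 * (a ^ 2 * b))) : ℤ⟦X⟧)) (eu * F) ∧
    ∀ N : ℕ, coeff N F ≠ 0 → (3 * N + 1 : ℤ) = a ^ 2 - a * b + b ^ 2 := by
    intro E w σ hE he hw
    have hE0 : 0 ≤ E := by
      have : 0 ≤ a ^ 2 - a * b + b ^ 2 := by nlinarith [sq_nonneg (a - b), sq_nonneg (a + b)]
      omega
    lift E to ℕ using hE0
    refine ⟨monomial E (w * (8 * (a ^ 2 * b))), ?_, ?_⟩
    · have h := σ.hasSum_iff.2 (hasSum_eu.mul_right (monomial E (w * (8 * (a ^ 2 * b)))))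
      convert! h using 1
      funext c
      simp only [Function.comp, monomial_mul_monomial]
      have := he c
      rw [show tri (a + c) + tri (b + c) + tri c = pentagonal (σ c) + E by exact_mod_cast this,
        hw c, mul_assoc]
    · intro N hN
      rw [coeff_monomial] at hN
      have : N = E := by
        by_contra h; exact hN (if_neg h)
      rw [this, hE]
  have tri2 := two_mul_tri
  have pen2 := two_mul_natCast_pentagonal
  obtain ⟨r, hr | hr | hr⟩ : ∃ r, a + b = 3 * r ∨ a + b = 3 * r + 1 ∨ a + b = 3 * r + 2 :=
    ⟨(a + b) / 3, by omega⟩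
  · refine ⟨0, ?_, by simp⟩
    obtain rfl : b = 3 * r - a := by omega
    have hs : Summable (fun c : ℤ => (monomial (tri (a + c) + tri (3 * r - a + c) + tri c)
        (sg (a + (3 * r - a) + c) * (8 * (a ^ 2 * (3 * r - a)))) : ℤ⟦X⟧)) := by
      refine summable_monomial _ _ fun N => (finite_tri N).subset fun c hc => ?_
      simp only [Set.mem_ofPred_eq] at *
      omega
    have h0 := eq_zero_of_hasSum_involutive hs.hasSum (σ := fun c => -(2 * r + 1) - c)
      (fun c => by ring) (by
        intro c
        rw [← map_neg]
        have h1 : tri (a + (-(2 * r + 1) - c)) + tri (3 * r - a + (-(2 * r + 1) - c)) +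
          tri (-(2 * r + 1) - c) = tri (a + c) + tri (3 * r - a + c) + tri c := by
          zify
          linarith [tri2 (a + (-(2 * r + 1) - c)), tri2 (3 * r - a + (-(2 * r + 1) - c)),
            tri2 (-(2 * r + 1) - c), tri2 (a + c), tri2 (3 * r - a + c), tri2 c]
        have h2 : sg (a + (3 * r - a) + (-(2 * r + 1) - c)) = - sg (a + (3 * r - a) + c) := by
          rw [show a + (3 * r - a) + (-(2 * r + 1) - c)
            = (a + (3 * r - a) + c) + (-2 * r - 2 * c - 1) by ring, sg_add,
            sg_odd (k := -2 * r - 2 * c - 1) (by rw [Int.odd_iff]; omega)]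
          ring
        rw [h1, h2]
        congr 1; ring)
    rw [mul_zero]
    exact h0 ▸ hs.hasSum
  · obtain rfl : b = 3 * r + 1 - a := by omega
    refine hns (a ^ 2 - a * (3 * r + 1) + 3 * r ^ 2 + 2 * r) (sg (2 * r))
      (Equiv.addRight (r + 1)) (by ring) ?_ ?_
    · intro c
      simp only [Equiv.coe_addRight]
      linarith [tri2 (a + c), tri2 (3 * r + 1 - a + c), tri2 c, pen2 (c + (r + 1))]
    · intro c
      rw [Equiv.coe_addRight, ← sg_add]
      exact congrArg sg (by ring)
  · obtain rfl : b = 3 * r + 2 - a := by omega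
    refine hns (a ^ 2 - a * (3 * r + 2) + 3 * r ^ 2 + 4 * r + 1) (-1)
      (Equiv.subLeft (-r - 1)) (by ring) ?_ ?_
    · intro c
      simp only [Equiv.subLeft_apply]
      linarith [tri2 (a + c), tri2 (3 * r + 2 - a + c), tri2 c, pen2 (-r - 1 - c)]
    · intro c
      rw [Equiv.subLeft_apply, ← sg_odd (k := 4 * r + 3 + 2 * c) (by rw [Int.odd_iff]; omega),
        ← sg_add]
      exact congrArg sg (by ring)

/-- The identity `-16 eu ^ 9 = eu * ∑ F a b` obtained from `hasSum_sheared` and `fiber_sum`,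
divided by `eu`, confines the support of `eu ^ 8` to exponents `N` with `3 N + 1` a value of
the norm form. -/
theorem coeff_eu_pow_eight (N : ℕ) (h : ∀ a b : ℤ, a ^ 2 - a * b + b ^ 2 ≠ 3 * N + 1) :
    coeff N (eu ^ 8) = 0 := by
  choose F hF hF' using fiber_sum
  have h1 := hasSum_sheared.prod_fiberwise (fun x => hF x.1 x.2)
  obtain ⟨g, hg⟩ := exists_inv_eu
  have h2 := h1.mul_left g
  have h3 : g * (-16 * eu ^ 9) = C (-16) * eu ^ 8 := by
    rw [show (C (-16) : ℤ⟦X⟧) = -16 by simp]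
    linear_combination -16 * eu ^ 8 * hg
  have h4 : ∀ x : ℤ × ℤ, g * (eu * F x.1 x.2) = F x.1 x.2 := by
    intro x; linear_combination F x.1 x.2 * hg
  simp only [h3, h4] at h2
  have h5 := (hasSum_iff_hasSum_coeff _).1 h2 N
  have h6 : ∀ x : ℤ × ℤ, coeff N (F x.1 x.2) = 0 := by
    intro x
    by_contra hx
    exact h _ _ (hF' x.1 x.2 N hx).symm
  simp only [h6, coeff_C_mul] at h5
  have := h5.unique hasSum_zero
  omega

/-! ### Reduction of the multipartition function modulo 5 -/

theorem mem_restricted_iff {m ℓ : ℕ} (x : m.Partition) :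
    x ∈ Nat.Partition.restricted m (¬ ℓ ∣ ·) ↔ ∀ i ∈ x.parts, ¬ ℓ ∣ i := by
  simp [Nat.Partition.restricted]

/-- The generating function of `B ℓ r` is the `r`-th power of that of `ℓ`-regular partitions. -/
theorem coeff_mk_pow (ℓ r n : ℕ) :
    (B ℓ r n : ZMod 5) = coeff n ((PowerSeries.mk fun n =>
      ((Nat.Partition.restricted n (¬ ℓ ∣ ·)).card : ZMod 5)) ^ r) := by
  let e : {f : Fin r → Σ a : Fin (n + 1), Nat.Partition a //
      (∑ i, ((f i).1 : ℕ)) = n ∧ ∀ i, ∀ part ∈ (f i).2.parts, ¬ ℓ ∣ part} ≃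
      Σ k : {k : Fin r → ℕ // k ∈ Finset.piAntidiag Finset.univ n},
        ∀ i, {x // x ∈ Nat.Partition.restricted (k.1 i) (¬ ℓ ∣ ·)} :=
    { toFun := fun f => ⟨⟨fun i => ((f.1 i).1 : ℕ), by simpa using f.2.1⟩,
        fun i => ⟨(f.1 i).2, (mem_restricted_iff (f.1 i).2).2 (f.2.2 i)⟩⟩
      invFun := fun g => ⟨fun i => ⟨⟨g.1.1 i, by
          have := Finset.single_le_sum (f := fun i => g.1.1 i)
            (fun _ _ => Nat.zero_le _) (Finset.mem_univ i)
          exact Nat.lt_succ_of_le (this.trans (Finset.mem_piAntidiag.1 g.1.2).1.le)⟩,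
        (g.2 i).1⟩, (Finset.mem_piAntidiag.1 g.1.2).1,
        fun i => (mem_restricted_iff _).1 (g.2 i).2⟩
      left_inv := fun f => rfl
      right_inv := fun g => rfl }
  have h1 : B ℓ r n = ∑ k ∈ Finset.piAntidiag (Finset.univ : Finset (Fin r)) n,
      ∏ i, (Nat.Partition.restricted (k i) (¬ ℓ ∣ ·)).card := by
    rw [B, Fintype.card_congr e, Fintype.card_sigma]
    simp only [Fintype.card_pi, Fintype.card_coe]
    exact Finset.sum_coe_sort (Finset.piAntidiag Finset.univ n)
      (fun k : Fin r → ℕ => ∏ i, (Nat.Partition.restricted (k i) (¬ ℓ ∣ ·)).card)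
  have h2 := coeff_prod (fun _ : Fin r => (PowerSeries.mk fun n =>
      ((Nat.Partition.restricted n (¬ ℓ ∣ ·)).card : ZMod 5))) n Finset.univ
  rw [Finset.prod_const, Finset.card_univ, Fintype.card_fin] at h2
  rw [h2, h1]
  push_cast
  refine Finset.sum_bij' (fun k _ => Finsupp.equivFunOnFinite.symm k) (fun k _ => ⇑k)
    ?_ ?_ ?_ ?_ ?_ <;> simp

/-- By Glaisher's theorem 5-regular partitions are equinumerous with partitions in which no part
appears five or more times, whose generating function is `∏ (1 + x + x ^ 2 + x ^ 3 + x ^ 4)` with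
`x = q ^ i`; modulo 5 each factor is `(1 - x) ^ 4`. -/
theorem genFun_eq : (PowerSeries.mk fun n =>
    ((Nat.Partition.restricted n (¬ 5 ∣ ·)).card : ZMod 5)) = pentagonalSeries (ZMod 5) ^ 4 := by
  simp only [Nat.Partition.card_restricted_eq_card_countRestricted _ (show 0 < 5 by norm_num)]
  have h1 := Nat.Partition.hasProd_powerSeriesMk_card_countRestricted (ZMod 5)
    (show 0 < 5 by norm_num)
  have h2 := ((hasProd_one_sub_X_pow (ZMod 5)).map (powMonoidHom 4) (by
    exact continuous_pow 4))
  refine h1.unique ?_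
  convert! h2 using 1
  funext i
  have h5 : (5 : (ZMod 5)⟦X⟧) = 0 := by
    rw [← map_ofNat (C (R := ZMod 5)), show (OfNat.ofNat 5 : ZMod 5) = 0 by decide, map_zero]
  simp only [Function.comp, powMonoidHom_apply, Finset.sum_range_succ, Finset.sum_range_zero,
    pow_mul]
  linear_combination (X ^ (i + 1) - (X ^ (i + 1)) ^ 2 + (X ^ (i + 1)) ^ 3 : (ZMod 5)⟦X⟧) * h5

theorem coeff_pow_five (F : (ZMod 5)⟦X⟧) (N : ℕ) : coeff (5 * N) (F ^ 5) = coeff N F := by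
  have : Fact (Nat.Prime 5) := ⟨by norm_num⟩
  have : CharP (ZMod 5)⟦X⟧ 5 :=
    charP_of_injective_ringHom (C_injective (R := ZMod 5)) 5
  have h := (hasSum_of_monomials_self F).map (frobenius (ZMod 5)⟦X⟧ 5) (by
    exact continuous_pow 5)
  have h1 := (hasSum_iff_hasSum_coeff _).1 h (5 * N)
  have h2 : HasSum (fun n : ℕ => coeff (5 * N)
      ((frobenius (ZMod 5)⟦X⟧ 5) (monomial n (coeff n F)))) (coeff N F) := by
    convert! hasSum_ite_eq N (coeff N F) using 1
    funext n
    rw [frobenius_def, monomial_pow, ZMod.pow_card, coeff_monomial]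
    by_cases hn : n = N
    · subst hn; simp [mul_comm]
    · rw [if_neg (by omega), if_neg hn]
  exact h1.unique h2

/-- Modulo 5, the generating function of `B 5 10` is `eu ^ 40 = (eu ^ 8) ^ 5`. -/
theorem B_mod (N : ℕ) : (B 5 10 (5 * N) : ZMod 5) = ((coeff N (eu ^ 8) : ℤ) : ZMod 5) := by
  have hmap : PowerSeries.map (Int.castRingHom (ZMod 5)) eu = pentagonalSeries (ZMod 5) := by
    ext n
    simp only [eu, coeff_map, pentagonalSeries, coeff_mk]
    split_ifs <;> simp
  rw [coeff_mk_pow, genFun_eq, show ((pentagonalSeries (ZMod 5) ^ 4) ^ 10)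
    = (pentagonalSeries (ZMod 5) ^ 8) ^ 5 by ring, coeff_pow_five, ← hmap, ← map_pow, coeff_map]
  rfl

end EulerEighth

theorem stmt_2 (t : ℕ) (p : Fin (t + 1) → ℕ)
    (hp : ∀ i, Nat.Prime (p i)) (hp5 : ∀ i, p i ≠ 5) (hpm : ∀ i, p i % 3 = 2)
    (n j : ℕ) (hj : 0 < j) (hjd : ¬ p (Fin.last t) ∣ j) :
    B 5 10 (5 * (∏ i, (p i) ^ 2) * n +
      5 * (((∏ i : Fin t, (p i.castSucc) ^ 2) * p (Fin.last t) *
        (p (Fin.last t) + 3 * j) - 1) / 3)) ≡ 0 [MOD 5] := by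
  rw [Fin.prod_univ_castSucc, Finset.prod_pow]
  set Q := ∏ i : Fin t, p i.castSucc with hQ
  set q := p (Fin.last t) with hq
  have hq3 : q % 3 = 2 := hpm _
  have hqp : q.Prime := hp _
  have hQ0 : 0 < Q := Finset.prod_pos fun i _ => (hp _).pos
  have hQ3 : Q ^ 2 % 3 = 1 := by
    have h3 : Nat.Coprime Q 3 := Nat.Coprime.prod_left fun i _ => by
      rw [Nat.coprime_comm, Nat.Prime.coprime_iff_not_dvd Nat.prime_three]
      have := hpm i.castSucc
      omega
    rw [Nat.coprime_comm, Nat.Prime.coprime_iff_not_dvd Nat.prime_three] at h3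
    have : Q % 3 = 1 ∨ Q % 3 = 2 := by omega
    rcases this with h | h <;> simp [Nat.pow_mod, h]
  have hM : Q ^ 2 * q * (q + 3 * j) % 3 = 1 := by
    rw [Nat.mul_mod, Nat.mul_mod (Q ^ 2), hQ3, hq3]
    omega
  set M := (Q ^ 2 * q * (q + 3 * j) - 1) / 3 with hMdef
  have hM' : 3 * M + 1 = Q ^ 2 * q * (q + 3 * j) := by omega
  rw [show 5 * (Q ^ 2 * q ^ 2) * n + 5 * M = 5 * (Q ^ 2 * q ^ 2 * n + M) by ring,
    ← ZMod.natCast_eq_natCast_iff, EulerEighth.B_mod, EulerEighth.coeff_eu_pow_eight]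
  · simp
  · intro a b hab
    refine EulerEighth.norm_ne hqp hq3 (m := (3 * q * n + q + 3 * j : ℕ)) ?_ Q hQ0 a b ?_
    · rw [Int.natCast_dvd_natCast]
      intro h
      have h1 : q ∣ 3 * j := by
        rw [show 3 * q * n + q + 3 * j = q * (3 * n + 1) + 3 * j by ring] at h
        exact (Nat.dvd_add_right (Dvd.intro _ rfl)).1 h
      rcases (Nat.Prime.dvd_mul hqp).1 h1 with h2 | h2
      · have := (Nat.prime_dvd_prime_iff_eq hqp Nat.prime_three).1 h2
        omega
      · exact hjd h2
    · rw [hab]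
      have : (3 * M + 1 : ℤ) = Q ^ 2 * q * (q + 3 * j) := by exact_mod_cast hM'
      push_cast
      linear_combination this
end

section
/- Let t ≥ 0 and let p_1, …, p_{t+1} be prime numbers, each different from 7, with p_i ≡ 3 (mod 4) for each i ∈ {1,…,t+1}. Then for every integer n ≥ 0 and every positive integer j not divisible by p_{t+1}, B_7^{(7)}(7·p_1^2⋯p_{t+1}^2·n + 7·(p_1^2⋯p_t^2·p_{t+1}·(p_{t+1}+4j) − 1)/4) ≡ 0 (mod 7). -/
open Finset

/-! ### The multipartition count modulo 7 -/

/-- `B ℓ r n` is the `n`-th coefficient of the `r`-th power of the generating polynomial of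
`ℓ`-regular partitions, truncated after degree `n`. -/
lemma B_cast_eq_coeff (R : Type*) [CommSemiring R] (ℓ r n : ℕ) :
    (B ℓ r n : R) = ((∑ a : Fin (n + 1),
      Polynomial.monomial (a : ℕ) (#(Nat.Partition.restricted a (¬ ℓ ∣ ·)) : R)) ^ r).coeff n := by
  classical
  set S : Finset (Σ a : Fin (n + 1), Nat.Partition a) :=
    univ.sigma fun a => Nat.Partition.restricted a (¬ ℓ ∣ ·) with hS
  have h1 : (∑ a : Fin (n + 1),
      Polynomial.monomial (a : ℕ) (#(Nat.Partition.restricted a (¬ ℓ ∣ ·)) : R)) =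
      ∑ x ∈ S, Polynomial.X ^ (x.1 : ℕ) := by
    rw [hS, Finset.sum_sigma]
    refine Finset.sum_congr rfl fun a _ => ?_
    simp [← Polynomial.C_mul_X_pow_eq_monomial]
  have h2 : (∑ x ∈ S, (Polynomial.X : Polynomial R) ^ (x.1 : ℕ)) ^ r =
      ∏ _i : Fin r, ∑ x ∈ S, (Polynomial.X : Polynomial R) ^ (x.1 : ℕ) := by simp
  rw [h1, h2, Finset.prod_univ_sum]
  simp_rw [Finset.prod_pow_eq_pow_sum, Polynomial.finsetSum_coeff, Polynomial.coeff_X_pow]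
  rw [Finset.sum_boole, B, Fintype.card_subtype]
  congr 2
  ext f
  simp [hS, Nat.Partition.restricted, eq_comm, and_comm]

/-- Taking the seventh power over `ZMod 7` substitutes `X^7` for `X`. -/
lemma B_seven (m : ℕ) :
    (B 7 7 (7 * m) : ZMod 7) = (#(Nat.Partition.restricted m (¬ 7 ∣ ·)) : ZMod 7) := by
  have : Fact (Nat.Prime 7) := ⟨by norm_num⟩
  rw [B_cast_eq_coeff, ← ZMod.expand_card, mul_comm 7 m, Polynomial.coeff_expand_mul (by norm_num),
    Polynomial.finsetSum_coeff, Finset.sum_eq_single (⟨m, by omega⟩ : Fin (m * 7 + 1))]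
  · simp
  · intro b _ hb
    rw [Polynomial.coeff_monomial, if_neg]
    exact fun h => hb (Fin.ext h)
  · simp

/-! ### The q-binomial theorem and a finite form of Jacobi's identity -/

/-- The Gaussian binomial coefficient `[N choose j]_q` at an element `q` of a commutative ring,
defined by the Pascal rule `[N+1, j+1] = [N, j] + q^(j+1) [N, j+1]`. -/
def gauss {R : Type*} [CommRing R] (q : R) : ℕ → ℕ → R
  | _, 0 => 1
  | 0, _ + 1 => 0
  | N + 1, j + 1 => gauss q N j + q ^ (j + 1) * gauss q N (j + 1)

/-- The `q`-Pochhammer symbol `(q; q)_n = ∏_{i=1}^n (1 - q^i)`. -/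
def poch {R : Type*} [CommRing R] (q : R) (n : ℕ) : R := ∏ i ∈ range n, (1 - q ^ (i + 1))

section QBinomial

variable {R : Type*} [CommRing R] (q : R)

lemma gauss_zero_right (N : ℕ) : gauss q N 0 = 1 := by cases N <;> rfl

lemma gauss_eq_zero : ∀ (N j : ℕ), N < j → gauss q N j = 0
  | 0, j + 1, _ => rfl
  | N + 1, j + 1, h => by
    rw [gauss, gauss_eq_zero N j (by omega), gauss_eq_zero N (j + 1) (by omega)]; ring

lemma gauss_self : ∀ (N : ℕ), gauss q N N = 1
  | 0 => rfl
  | N + 1 => by rw [gauss, gauss_self N, gauss_eq_zero q N (N + 1) (by omega)]; ring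

lemma poch_succ (n : ℕ) : poch q (n + 1) = poch q n * (1 - q ^ (n + 1)) := by
  rw [poch, prod_range_succ, poch]

lemma gauss_mul_poch : ∀ (a b : ℕ), gauss q (a + b) a * poch q a * poch q b = poch q (a + b)
  | 0, b => by simp [gauss_zero_right, poch]
  | a + 1, 0 => by simp [gauss_self, poch]
  | a + 1, b + 1 => by
    have h1 := gauss_mul_poch a (b + 1)
    have h2 := gauss_mul_poch (a + 1) b
    rw [show a + 1 + b = a + (b + 1) by ring] at h2
    rw [show a + 1 + (b + 1) = (a + (b + 1)) + 1 by ring, gauss, poch_succ q (a + (b + 1))]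
    rw [poch_succ q b] at h1 ⊢
    rw [poch_succ q a] at h2 ⊢
    linear_combination (1 - q ^ (a + 1)) * h1 + q ^ (a + 1) * (1 - q ^ (b + 1)) * h2

/-- The homogeneous `q`-binomial theorem. -/
lemma gauss_binomial (x z : R) (N : ℕ) :
    ∏ i ∈ range N, (x + z * q ^ i) =
      ∑ j ∈ range (N + 1), q ^ (j.choose 2) * gauss q N j * z ^ j * x ^ (N - j) := by
  induction N generalizing z with
  | zero => simp [gauss]
  | succ N ih =>
    have h : ∏ i ∈ range N, (x + z * q ^ (i + 1)) = ∏ i ∈ range N, (x + (z * q) * q ^ i) :=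
      prod_congr rfl fun i _ => by ring
    rw [prod_range_succ', h, ih, sum_range_succ' _ (N + 1)]
    have e : ∀ j ∈ range (N + 1), q ^ ((j + 1).choose 2) * gauss q (N + 1) (j + 1) * z ^ (j + 1)
          * x ^ (N + 1 - (j + 1)) =
        q ^ (j.choose 2) * gauss q N j * (z * q) ^ j * x ^ (N - j) * z
        + q ^ ((j + 1).choose 2) * gauss q N (j + 1) * (z * q) ^ (j + 1) * x ^ (N - j) := by
      intro j _
      rw [Nat.choose_succ_succ' j 1, gauss, Nat.add_sub_add_right]
      simp only [Nat.choose_one_right]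
      ring
    rw [sum_congr rfl e, sum_add_distrib, ← sum_mul]
    have e2 : ∑ j ∈ range (N + 1), q ^ (j.choose 2) * gauss q N j * (z * q) ^ j * x ^ (N - j) * x
       = ∑ j ∈ range (N + 1),
           q ^ ((j + 1).choose 2) * gauss q N (j + 1) * (z * q) ^ (j + 1) * x ^ (N - j)
          + x ^ (N + 1) := by
      rw [sum_range_succ', sum_range_succ, gauss_eq_zero q N (N + 1) (by omega)]
      simp only [gauss_zero_right]
      have : ∀ j ∈ range N, q ^ ((j + 1).choose 2) * gauss q N (j + 1) * (z * q) ^ (j + 1)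
          * x ^ (N - (j + 1)) * x = q ^ ((j + 1).choose 2) * gauss q N (j + 1) * (z * q) ^ (j + 1)
          * x ^ (N - j) := by
        intro j hj
        rw [mul_assoc, ← pow_succ]
        congr 2
        have := mem_range.1 hj
        omega
      rw [sum_congr rfl this]
      simp [pow_succ]
    rw [pow_zero, mul_one, mul_add, sum_mul, e2]
    simp [gauss_zero_right]
    ring

/-- Finite form of Jacobi's identity for the cube of the Euler product: the derivative at `z = 1` of
the `q`-binomial expansion of `∏_{i < 2n+1} (z q^i - q^n)`, whose factor `i = n` vanishes at
`z = 1`. -/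
lemma finite_jacobi (n : ℕ) :
    q ^ (n.choose 2 + n + n * n) * poch q n ^ 2 * (-1) ^ n =
      ∑ j ∈ range (2 * n + 2), (-1) ^ (2 * n + 1 - j) * (j : R) *
        q ^ (j.choose 2 + n * (2 * n + 1 - j)) * gauss q (2 * n + 1) j := by
  classical
  have key := congrArg (fun P : Polynomial R => (Polynomial.derivative P).eval 1)
    (gauss_binomial (Polynomial.C q) (-Polynomial.C (q ^ n)) Polynomial.X (2 * n + 1))
  have hg : ∀ N j, gauss (Polynomial.C q) N j = Polynomial.C (gauss q N j) := by
    intro N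
    induction N with
    | zero => intro j; cases j <;> simp [gauss]
    | succ N ih => intro j; cases j <;> simp [gauss, ih]
  have rhs : ∀ j ∈ range (2 * n + 1 + 1), (Polynomial.derivative (Polynomial.C q ^ (j.choose 2) *
      gauss (Polynomial.C q) (2 * n + 1) j * Polynomial.X ^ j
      * (-Polynomial.C (q ^ n)) ^ (2 * n + 1 - j))).eval 1 =
      (-1) ^ (2 * n + 1 - j) * (j : R) *
        q ^ (j.choose 2 + n * (2 * n + 1 - j)) * gauss q (2 * n + 1) j := by
    intro j _
    rw [hg, show Polynomial.C q ^ (j.choose 2) * Polynomial.C (gauss q (2 * n + 1) j) *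
      Polynomial.X ^ j * (-Polynomial.C (q ^ n)) ^ (2 * n + 1 - j) =
      Polynomial.C (q ^ (j.choose 2) * gauss q (2 * n + 1) j * (-q ^ n) ^ (2 * n + 1 - j)) *
      Polynomial.X ^ j by simp only [map_mul, map_pow, map_neg]; ring]
    rw [neg_pow (q ^ n), Polynomial.derivative_C_mul_X_pow, Polynomial.eval_C_mul,
      Polynomial.eval_pow, Polynomial.eval_X, one_pow]
    ring
  rw [Polynomial.derivative_sum, Polynomial.eval_finsetSum, sum_congr rfl rhs] at key
  rw [show 2 * n + 2 = 2 * n + 1 + 1 by ring, ← key]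
  rw [show 2 * n + 1 = n + (n + 1) by ring, prod_range_add, prod_range_succ']
  simp only [Polynomial.derivative_mul, Polynomial.eval_mul, Polynomial.eval_add]
  simp only [Polynomial.eval_prod, Polynomial.eval_add, Polynomial.eval_neg, Polynomial.eval_mul,
    Polynomial.eval_pow, Polynomial.eval_C, Polynomial.eval_X]
  -- At `z = 1` only the term differentiating the vanishing factor `i = n` survives; `l1` and `l2`
  -- evaluate the factors below and above it.
  have l1 : ∏ i ∈ range n, (-q ^ n + 1 * q ^ i) = q ^ (n.choose 2) * poch q n := by
    rw [Nat.choose_two_right, ← sum_range_id, ← prod_pow_eq_pow_sum, poch,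
      ← prod_range_reflect (fun i => 1 - q ^ (i + 1)), ← prod_mul_distrib]
    refine prod_congr rfl fun i hi => ?_
    have := mem_range.1 hi
    rw [mul_sub, ← pow_add, show i + (n - 1 - i + 1) = n by omega]
    ring
  have l2 : ∏ i ∈ range n, (-q ^ n + 1 * q ^ (n + (i + 1))) =
      (-1) ^ n * q ^ (n * n) * poch q n := by
    have : (-1) ^ n * q ^ (n * n) = ∏ _i ∈ range n, (-q ^ n) := by
      rw [prod_const, card_range, neg_pow (q ^ n), pow_mul]
    rw [this, poch, ← prod_mul_distrib]
    refine prod_congr rfl fun i _ => by ring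
  rw [l1, l2]
  simp
  ring

end QBinomial

open PowerSeries PowerSeries.WithPiTopology Filter

/-! ### The Euler product modulo 7 -/

/-- The Euler product `∏_{i ≥ 1} (1 - X^i)` as a power series over `ZMod 7`, the infinite product
being taken in the topology of coefficientwise convergence. -/
noncomputable def eulerProd : PowerSeries (ZMod 7) := ∏' i : ℕ, (1 - X ^ (i + 1))

/-- The factors with index not divisible by `7` cancel, leaving `∏ (1 - X^(7 i))`, which is the
seventh power of the Euler product in characteristic `7`. -/
lemma restricted_mul_euler :
    (PowerSeries.mk fun n ↦ (#(Nat.Partition.restricted n (¬ 7 ∣ ·)) : ZMod 7)) * eulerProd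
      = eulerProd ^ 7 := by
  have : Fact (Nat.Prime 7) := ⟨by norm_num⟩
  have hf : HasProd (fun i : ℕ => (1 : PowerSeries (ZMod 7)) - X ^ (i + 1)) eulerProd :=
    (multipliable_one_sub_X_pow (ZMod 7)).hasProd
  have hR := (Nat.Partition.hasProd_powerSeriesMk_card_restricted (ZMod 7) (¬ 7 ∣ ·)).mul hf
  have h7 : HasProd (fun i : ℕ => (1 : PowerSeries (ZMod 7)) - X ^ (7 * (i + 1)))
      (eulerProd ^ 7) := by
    have := hf.map (powMonoidHom 7) (by exact continuous_pow 7)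
    have e : (fun i : ℕ => (1 : PowerSeries (ZMod 7)) - X ^ (7 * (i + 1))) =
        powMonoidHom 7 ∘ fun i : ℕ => (1 : PowerSeries (ZMod 7)) - X ^ (i + 1) := by
      ext1 i
      have : CharP (PowerSeries (ZMod 7)) 7 :=
        charP_of_injective_algebraMap' (ZMod 7) 7
      rw [Function.comp_apply, powMonoidHom_apply, sub_pow_char, one_pow, ← pow_mul, mul_comm]
    rw [e]
    exact this
  have hinj : Function.Injective (fun i : ℕ => 7 * i + 6) := fun a b h => by simpa using h
  have key : HasProd (fun i : ℕ => if 7 ∣ i + 1 then (1 : PowerSeries (ZMod 7)) - X ^ (i + 1) else 1)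
      (eulerProd ^ 7) := by
    rw [← hinj.hasProd_iff]
    · convert h7 using 1
      ext1 i
      simp [show 7 * i + 6 + 1 = 7 * (i + 1) by ring]
    · intro x hx
      rw [if_neg]
      rintro ⟨k, hk⟩
      exact hx ⟨k - 1, by simp; omega⟩
  refine hR.unique (key.congr_fun fun i => ?_)
  by_cases h : 7 ∣ i + 1
  · simp [h]
  · simp only [h, not_false_eq_true, if_true, if_false, pow_mul]
    exact tsum_pow_mul_one_sub_of_constantCoeff_eq_zero (by simp)

lemma eulerProd_ne_zero : eulerProd ≠ 0 :=
  have : Fact (Nat.Prime 7) := ⟨by norm_num⟩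
  tprod_one_sub_X_pow_ne_zero _

lemma restricted_eq : (PowerSeries.mk fun n ↦ (#(Nat.Partition.restricted n (¬ 7 ∣ ·)) : ZMod 7))
     = eulerProd ^ 6 := by
  have : Fact (Nat.Prime 7) := ⟨by norm_num⟩
  apply mul_right_cancel₀ eulerProd_ne_zero
  rw [restricted_mul_euler, ← pow_succ]

/-! ### Support of the cube and of the sixth power of the Euler product -/

lemma poch_congr {K : Type*} [CommRing K] {m n : ℕ} (h : m ≤ n) :
    (X : PowerSeries K) ^ (m + 1) ∣ poch X n - poch X m := by
  induction n, h using Nat.le_induction with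
  | base => simp
  | succ n hn ih =>
    rw [poch_succ, show poch X n * (1 - X ^ (n + 1)) - poch X m =
      (poch X n - poch X m) - X ^ (n + 1) * poch (X : PowerSeries K) n by ring]
    exact dvd_sub ih ((pow_dvd_pow _ (by omega)).mul_right _)

lemma isUnit_poch {K : Type*} [CommRing K] (n : ℕ) : IsUnit (poch (X : PowerSeries K) n) := by
  rw [PowerSeries.isUnit_iff_constantCoeff, poch, map_prod]
  simp

/-- Modulo `X^(m+1)` all `(X; X)_i` with `i ≥ m` agree, so the formula
`[2n+1 choose j] (X; X)_j (X; X)_{2n+1-j} = (X; X)_{2n+1}` reduces to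
`[2n+1 choose j] (X; X)_n = 1` for central `j`. -/
lemma gauss_mul_poch_congr {K : Type*} [CommRing K] {m n j : ℕ} (hn : m ≤ n) (hj : m ≤ j)
    (hj' : m + j ≤ 2 * n + 1) :
    (X : PowerSeries K) ^ (m + 1) ∣ gauss X (2 * n + 1) j * poch X n - 1 := by
  obtain ⟨b, hb⟩ : ∃ b, 2 * n + 1 = j + b := ⟨2 * n + 1 - j, by omega⟩
  have h := gauss_mul_poch (X : PowerSeries K) j b
  rw [hb]
  obtain ⟨u, hu⟩ := poch_congr (K := K) hn
  obtain ⟨v, hv⟩ := poch_congr (K := K) hj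
  obtain ⟨w, hw⟩ := poch_congr (K := K) (show m ≤ b by omega)
  obtain ⟨y, hy⟩ := poch_congr (K := K) (show m ≤ j + b by omega)
  rw [← (isUnit_poch (K := K) j).dvd_mul_left]
  refine ⟨gauss X (j + b) j * poch X j * (u - w) + y - v, ?_⟩
  linear_combination h + gauss X (j + b) j * poch X j * (hu - hw) + hy - hv

/-- The exponents in `finite_jacobi` exceed the exponent on its left-hand side by a triangular
number: `k = j - n - 1` if `j > n` and `k = n - j` otherwise. -/
lemma exponent_eq (n j : ℕ) (hj : j < 2 * n + 2) : ∃ k, (n ≤ j + k ∧ j ≤ n + 1 + k) ∧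
    j.choose 2 + n * (2 * n + 1 - j) = (n.choose 2 + n + n * n) + (k + 1).choose 2 := by
  rcases le_or_gt (n + 1) j with h | h
  · obtain ⟨k, rfl⟩ := Nat.exists_eq_add_of_le h
    obtain ⟨l, rfl⟩ := Nat.exists_eq_add_of_le (show k ≤ n by omega)
    refine ⟨k, by omega, ?_⟩
    rw [show 2 * (k + l) + 1 - (k + l + 1 + k) = l by omega]
    qify
    simp only [Nat.cast_choose_two]
    push_cast
    ring
  · obtain ⟨k, rfl⟩ := Nat.exists_eq_add_of_le (show j ≤ n by omega)
    refine ⟨k, by omega, ?_⟩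
    rw [show 2 * (j + k) + 1 - j = j + 2 * k + 1 by omega]
    qify
    simp only [Nat.cast_choose_two]
    push_cast
    ring

lemma coeff_poch_cube {K : Type*} [CommRing K] [IsDomain K] {m n : ℕ} (hn : 2 * m ≤ n)
    (hm : ∀ k, m ≠ (k + 1).choose 2) : coeff m (poch (X : PowerSeries K) n ^ 3) = 0 := by
  choose! k hk hk2 using exponent_eq n
  have h1 : poch (X : PowerSeries K) n ^ 2 * (-1) ^ n =
      ∑ j ∈ range (2 * n + 2), (-1) ^ (2 * n + 1 - j) * (j : PowerSeries K) *
        X ^ ((k j + 1).choose 2) * gauss X (2 * n + 1) j := by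
    apply mul_left_cancel₀ (pow_ne_zero (n.choose 2 + n + n * n) (X_ne_zero (R := K)))
    rw [← mul_assoc, finite_jacobi, mul_sum]
    refine sum_congr rfl fun j hj => ?_
    rw [hk2 j (mem_range.1 hj), pow_add]
    ring
  have h2 : poch (X : PowerSeries K) n ^ 3 =
      ∑ j ∈ range (2 * n + 2), X ^ ((k j + 1).choose 2) * (C ((-1) ^ n * (-1) ^ (2 * n + 1 - j) *
        (j : K)) * (gauss X (2 * n + 1) j * poch X n)) := by
    have hs : ((-1 : PowerSeries K) ^ n) * (-1) ^ n = 1 := by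
      rw [← mul_pow]; simp
    calc poch (X : PowerSeries K) n ^ 3
        = (poch X n ^ 2 * (-1) ^ n) * ((-1) ^ n * poch X n) := by
          linear_combination (-poch (X : PowerSeries K) n ^ 3) * hs
      _ = _ := by
          rw [h1, sum_mul]
          refine sum_congr rfl fun j _ => ?_
          simp only [map_mul, map_pow, map_neg, map_one, map_natCast]
          ring
  rw [h2, map_sum]
  refine sum_eq_zero fun j hj => ?_
  have hj := mem_range.1 hj
  rw [coeff_X_pow_mul']
  split_ifs with hle
  -- A term contributing in degree `m` has `j` within `m + 1` of `n`, so its Gaussian factor is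
  -- trivial up to that degree.
  · have hkm : k j ≤ m := by
      have : (k j + 1).choose 2 = k j + (k j).choose 2 := by
        rw [Nat.choose_succ_succ' _ 1, Nat.choose_one_right]
      omega
    obtain ⟨r, hr⟩ := gauss_mul_poch_congr (K := K) (m := m) (n := n) (j := j)
      (by omega) (by have := hk j hj; omega) (by have := hk j hj; omega)
    rw [coeff_C_mul, eq_add_of_sub_eq hr, map_add, coeff_X_pow_mul', if_neg (by omega),
      coeff_one, if_neg (by have := hm (k j); omega)]
    simp
  · rfl

lemma coeff_euler_cube {m : ℕ} (hm : ∀ k, m ≠ (k + 1).choose 2) :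
    coeff m (eulerProd ^ 3) = 0 := by
  have : Fact (Nat.Prime 7) := ⟨by norm_num⟩
  have hf : Tendsto (fun n => poch (X : PowerSeries (ZMod 7)) n) atTop (nhds eulerProd) :=
    (multipliable_one_sub_X_pow (ZMod 7)).hasProd.tendsto_prod_nat
  have h3 := ((continuous_coeff (ZMod 7) m).tendsto _).comp (hf.pow 3)
  refine tendsto_nhds_unique h3 (tendsto_const_nhds.congr' ?_)
  filter_upwards [eventually_ge_atTop (2 * m)] with n hn
  exact (coeff_poch_cube hn hm).symm

/-- If `m = k (k + 1) / 2 + l (l + 1) / 2`, then `8 m + 2 = (2 k + 1)² + (2 l + 1)²`. -/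
lemma coeff_euler_six {m : ℕ} (hm : ¬ ∃ x y, 8 * m + 2 = x ^ 2 + y ^ 2) :
    coeff m (eulerProd ^ 6) = 0 := by
  rw [show eulerProd ^ 6 = eulerProd ^ 3 * eulerProd ^ 3 by ring, coeff_mul]
  refine sum_eq_zero fun ab hab => ?_
  have hab := mem_antidiagonal.1 hab
  by_contra hne
  obtain ⟨k, hk⟩ : ∃ k, ab.1 = (k + 1).choose 2 := by
    by_contra! h
    exact hne (by rw [coeff_euler_cube h, zero_mul])
  obtain ⟨l, hl⟩ : ∃ k, ab.2 = (k + 1).choose 2 := by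
    by_contra! h
    exact hne (by rw [coeff_euler_cube h, mul_zero])
  refine hm ⟨2 * k + 1, 2 * l + 1, ?_⟩
  rw [← hab, hk, hl]
  qify
  simp only [Nat.cast_choose_two]
  push_cast
  ring

theorem stmt_3 (t : ℕ) (p : Fin (t + 1) → ℕ)
    (hp : ∀ i, Nat.Prime (p i)) (hp7 : ∀ i, p i ≠ 7) (hpm : ∀ i, p i % 4 = 3)
    (n j : ℕ) (hj : 0 < j) (hjd : ¬ p (Fin.last t) ∣ j) :
    B 7 7 (7 * (∏ i, (p i) ^ 2) * n +
      7 * (((∏ i : Fin t, (p i.castSucc) ^ 2) * p (Fin.last t) *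
        (p (Fin.last t) + 4 * j) - 1) / 4)) ≡ 0 [MOD 7] := by
  rw [mul_assoc, ← mul_add, ← ZMod.natCast_eq_natCast_iff, B_seven, Nat.cast_zero]
  have h := congrArg (coeff ((∏ i, (p i) ^ 2) * n + ((∏ i : Fin t, (p i.castSucc) ^ 2) *
    p (Fin.last t) * (p (Fin.last t) + 4 * j) - 1) / 4)) restricted_eq
  rw [coeff_mk] at h
  rw [h]
  apply coeff_euler_six
  rw [Fin.prod_univ_castSucc, Finset.prod_pow]
  set s := ∏ i : Fin t, p i.castSucc with hs
  set r := p (Fin.last t) with hr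
  have hrp : r.Prime := hp _
  have hr4 : r % 4 = 3 := hpm _
  have hs0 : s ≠ 0 := Finset.prod_ne_zero_iff.2 fun i _ => (hp _).ne_zero
  have hs2 : s ^ 2 % 4 = 1 := by
    have hodd : Odd s := by
      refine Finset.prod_induction _ Odd (fun _ _ => Odd.mul) odd_one fun i _ => ?_
      exact Nat.odd_iff.2 (by have := hpm i.castSucc; omega)
    obtain ⟨c, hc⟩ := hodd
    rw [hc, show (2 * c + 1) ^ 2 = 4 * (c * c + c) + 1 by ring]
    omega
  have hmod : (s ^ 2 * r * (r + 4 * j)) % 4 = 1 := by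
    rw [Nat.mul_mod, Nat.mul_mod (s ^ 2), hs2, Nat.add_mul_mod_self_left, hr4]
  have hN : 8 * (s ^ 2 * r ^ 2 * n + (s ^ 2 * r * (r + 4 * j) - 1) / 4) + 2 =
      2 * (s ^ 2 * (r * (4 * (r * n + j) + r))) := by
    have e : s ^ 2 * (r * (4 * (r * n + j) + r)) =
      4 * (s ^ 2 * r ^ 2 * n) + s ^ 2 * r * (r + 4 * j) := by ring
    rw [e]
    omega
  rw [hN, Nat.eq_sq_add_sq_iff]
  intro hsq
  have : Fact r.Prime := ⟨hrp⟩
  have hnd : ¬ r ∣ 4 * (r * n + j) + r := by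
    intro hd
    rw [Nat.dvd_add_left (dvd_refl r)] at hd
    rcases hrp.dvd_mul.1 hd with h4 | h4
    · have : r ≤ 4 := Nat.le_of_dvd (by norm_num) h4
      interval_cases r <;> omega
    · exact hjd ((Nat.dvd_add_right (dvd_mul_right r n)).1 h4)
  have hne : 4 * (r * n + j) + r ≠ 0 := by omega
  have hr0 := hrp.ne_zero
  have hev := hsq r (by
    rw [Nat.mem_primeFactors]
    refine ⟨hrp, Dvd.dvd.mul_left (Dvd.dvd.mul_left (dvd_mul_right _ _) _) _, by positivity⟩) hr4
  have h2 : padicValNat r 2 = 0 := padicValNat.eq_zero_of_not_dvd fun h2 => by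
    have := Nat.le_of_dvd (by norm_num) h2
    interval_cases r <;> omega
  rw [padicValNat.mul (by norm_num) (by positivity), padicValNat.mul (by positivity) (by positivity),
    padicValNat.mul hr0 hne, padicValNat.pow, padicValNat_self,
    padicValNat.eq_zero_of_not_dvd hnd, h2] at hev
  rcases hev with ⟨c, hc⟩
  omega
end
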